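/- arXiv:2406.07821 — 7 statements merged into one kernel-verified Lean document; each statement's English description precedes it below -/
import Mathlib

section
/- Let $G$ be a connected graph on $n$ vertices, let $S \subseteq V(G)$ with $1 \le |S| < n$, and let $T$ be a set of isolated vertices of $G - S$ such that every vertex of $T$ is adjacent in $G$ to every vertex of $S$. Let $H_1$ and $H_2$ be two graphs with vertex set $T$, and for $i = 1, 2$ let $G_i$ be the graph obtained from $G$ by adding the edges of $H_i$ inside $T$. Then there exists a constant $R$ depending only on $|T|$ such that: if $\rho(G) > R$ and $H_1$ is walk-equivalent to $H_2$, then $\rho(G_1) = \rho(G_2)$. -/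
open Finset Matrix SimpleGraph
open scoped Classical

/-- `walkCount G ℓ u` is the number of walks of length `ℓ` in `G` starting at `u`
(the quantity `w^ℓ_G(u)` of the paper, with `walkCount G 0 u = 1`). -/
noncomputable def walkCount {V : Type*} [Fintype V] (G : SimpleGraph V) : ℕ → V → ℕ
  | 0, _ => 1
  | ℓ + 1, u => ∑ v ∈ Finset.univ.filter (fun v => G.Adj u v), walkCount G ℓ v

/-- `totalWalks G ℓ = W^ℓ(G) = ∑_u w^ℓ_G(u)`, the number of walks of length `ℓ` in `G`. -/
noncomputable def totalWalks {V : Type*} [Fintype V] (G : SimpleGraph V) (ℓ : ℕ) : ℕ :=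
  ∑ u, walkCount G ℓ u

/-- The spectral radius `ρ(G)` of a graph `G`: the largest eigenvalue of its
adjacency matrix. -/
noncomputable def spectralRad {V : Type*} [Fintype V] (G : SimpleGraph V) : ℝ :=
  sSup {μ : ℝ | ∃ x : V → ℝ, x ≠ 0 ∧ (G.adjMatrix ℝ) *ᵥ x = μ • x}

/-!
Let `b_H = (μ - A(H))⁻¹ 1`. If `x` is a `μ`-eigenvector of `G ⊔ H` and `s` is the sum of its entries
over `S`, then `(μ - A(H)) x = s` on `T`, so `x = s • b_H` on `T` as soon as `μ` is not an
eigenvalue of `H`. Outside `T` the eigenvalue equation sees `T` only through the sum of `x` over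
`T`. Hence an eigenvector `x` of `G ⊔ H₁` yields the eigenvector `x + s • (b_{H₂} - b_{H₁})` of
`G ⊔ H₂` whenever `b_{H₁}` and `b_{H₂}` have the same sum. By Cayley–Hamilton, multiplying both
resolvents at `μ` by a common nonzero scalar turns them into values of one polynomial at `A(H₁)` and
`A(H₂)`, so walk-equivalence makes the two sums equal. Finally, `ρ(Hᵢ) ≤ |T|`, so `ρ(G) > |T|` keeps
`ρ(G ⊔ Hᵢ)` away from the spectra of `H₁` and `H₂`.
-/

section Resolvent

open Polynomial

theorem eval_smul_resolvent {R A : Type*} [CommRing R] [Ring A] [Algebra R A] {a : A} {r : R}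
    (hr : r ∉ spectrum R a) {p : R[X]} (hp : aeval a p = 0) :
    p.eval r • resolvent a r = aeval a (p /ₘ (X - C r)) := by
  rw [spectrum.notMem_iff] at hr
  have hdiv : (algebraMap R A r - a) * aeval a (p /ₘ (X - C r)) = algebraMap R A (p.eval r) := by
    have h := congrArg (aeval a) (X_sub_C_mul_divByMonic_eq_sub_modByMonic p r)
    rw [modByMonic_X_sub_C_eq_C_eval, map_mul, map_sub, map_sub, aeval_X, aeval_C, aeval_C, hp,
      zero_sub] at h
    rw [← neg_sub a, neg_mul, h, neg_neg]
  calc p.eval r • resolvent a r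
      = resolvent a r * algebraMap R A (p.eval r) := by
        rw [← Algebra.commutes, Algebra.smul_def]
    _ = aeval a (p /ₘ (X - C r)) := by
        rw [← hdiv, resolvent, Ring.inverse_mul_cancel_left _ _ hr]

variable {m n : Type*} [Fintype m] [DecidableEq m] [Fintype n] [DecidableEq n]

theorem dotProduct_aeval_mulVec_eq {R : Type*} [CommRing R] {A : Matrix m m R} {B : Matrix n n R}
    {u v : m → R} {u' v' : n → R} (h : ∀ i : ℕ, u ⬝ᵥ A ^ i *ᵥ v = u' ⬝ᵥ B ^ i *ᵥ v') (p : R[X]) :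
    u ⬝ᵥ aeval A p *ᵥ v = u' ⬝ᵥ aeval B p *ᵥ v' := by
  simp only [aeval_eq_sum_range, Matrix.sum_mulVec, Matrix.smul_mulVec, dotProduct_sum,
    dotProduct_smul, h]

theorem dotProduct_resolvent_mulVec_eq {K : Type*} [Field K] {A : Matrix m m K} {B : Matrix n n K}
    {u v : m → K} {u' v' : n → K} (h : ∀ i : ℕ, u ⬝ᵥ A ^ i *ᵥ v = u' ⬝ᵥ B ^ i *ᵥ v') {μ : K}
    (hA : μ ∉ spectrum K A) (hB : μ ∉ spectrum K B) :
    u ⬝ᵥ resolvent A μ *ᵥ v = u' ⬝ᵥ resolvent B μ *ᵥ v' := by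
  set p := A.charpoly * B.charpoly
  have hpA : aeval A p = 0 := by rw [map_mul, Matrix.aeval_self_charpoly, zero_mul]
  have hpB : aeval B p = 0 := by rw [map_mul, Matrix.aeval_self_charpoly, mul_zero]
  have hpμ : p.eval μ ≠ 0 := by
    rw [Matrix.mem_spectrum_iff_isRoot_charpoly, IsRoot] at hA hB
    rw [eval_mul]
    exact mul_ne_zero hA hB
  refine mul_left_cancel₀ hpμ ?_
  rw [← smul_eq_mul, ← smul_eq_mul, ← dotProduct_smul, ← dotProduct_smul, ← Matrix.smul_mulVec,
    ← Matrix.smul_mulVec, eval_smul_resolvent hA hpA, eval_smul_resolvent hB hpB]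
  exact dotProduct_aeval_mulVec_eq h _

end Resolvent

section Spectrum

variable {n : Type*} [Fintype n] [DecidableEq n]

theorem mem_spectrum_iff_exists_mulVec_eq_smul {K : Type*} [Field K] {A : Matrix n n K} {μ : K} :
    μ ∈ spectrum K A ↔ ∃ x : n → K, x ≠ 0 ∧ A *ᵥ x = μ • x := by
  rw [← Matrix.spectrum_toLin', ← Module.End.hasEigenvalue_iff_mem_spectrum]
  constructor
  · intro h
    obtain ⟨x, hx⟩ := h.exists_hasEigenvector
    exact ⟨x, hx.2, by simpa using hx.apply_eq_smul⟩
  · rintro ⟨x, hx0, hx⟩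
    exact Module.End.hasEigenvalue_of_hasEigenvector
      (x := x) ⟨Module.End.mem_eigenspace_iff.2 (by simpa using hx), hx0⟩

theorem dotProduct_mulVec_le_sSup_spectrum {A : Matrix n n ℝ} (hA : A.IsHermitian) (x : n → ℝ) :
    x ⬝ᵥ A *ᵥ x ≤ sSup (spectrum ℝ A) * (x ⬝ᵥ x) := by
  set ρ := sSup (spectrum ℝ A)
  have hpos : (algebraMap ℝ (Matrix n n ℝ) ρ - A).PosSemidef := by
    refine Matrix.posSemidef_iff_isHermitian_and_spectrum_nonneg.2
      ⟨(Matrix.isHermitian_diagonal _).sub hA, ?_⟩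
    rw [← spectrum.singleton_sub_eq, Set.singleton_sub]
    rintro _ ⟨μ, hμ, rfl⟩
    exact sub_nonneg.2 (le_csSup A.finite_spectrum.bddAbove hμ)
  have h := hpos.dotProduct_mulVec_nonneg x
  rwa [Algebra.algebraMap_eq_smul_one, Matrix.sub_mulVec, Matrix.smul_mulVec, Matrix.one_mulVec,
    star_trivial, dotProduct_sub, dotProduct_smul, smul_eq_mul, sub_nonneg] at h

-- Testing the quadratic form of `B` on `|x|` for an eigenvector `x` of `A` gives at least `μ |x|²`.
theorem le_sSup_spectrum_of_abs_le {A B : Matrix n n ℝ} (hB : B.IsHermitian)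
    (hAB : ∀ i j, |A i j| ≤ B i j) {μ : ℝ} (hμ : μ ∈ spectrum ℝ A) :
    μ ≤ sSup (spectrum ℝ B) := by
  obtain ⟨x, hx0, hx⟩ := mem_spectrum_iff_exists_mulVec_eq_smul.1 hμ
  have hpos : 0 < x ⬝ᵥ x := by simpa using Matrix.dotProduct_star_self_pos_iff.2 hx0
  refine le_of_mul_le_mul_right ?_ hpos
  calc μ * (x ⬝ᵥ x)
      = ∑ i, ∑ j, x i * (A i j * x j) := by
        rw [← smul_eq_mul, ← dotProduct_smul, ← hx]
        simp only [dotProduct, mulVec, Finset.mul_sum]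
    _ ≤ ∑ i, ∑ j, |x i| * (B i j * |x j|) := by
        refine Finset.sum_le_sum fun i _ => Finset.sum_le_sum fun j _ => ?_
        refine (le_abs_self _).trans ?_
        rw [abs_mul, abs_mul]
        gcongr
        exact hAB i j
    _ = (|x|) ⬝ᵥ B *ᵥ |x| := by simp only [dotProduct, mulVec, Finset.mul_sum, Pi.abs_apply]
    _ ≤ sSup (spectrum ℝ B) * ((|x|) ⬝ᵥ |x|) := dotProduct_mulVec_le_sSup_spectrum hB _
    _ = sSup (spectrum ℝ B) * (x ⬝ᵥ x) := by
        simp only [dotProduct, Pi.abs_apply, abs_mul_abs_self]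

end Spectrum

section SpectralRadius

variable {V : Type*} [Fintype V] {G G' : SimpleGraph V}

-- `spectralRad` is defined with the classical decidability of adjacency, which is not the instance
-- found for `G ⊔ H`.
theorem spectralRad_eq_sSup_spectrum [DecidableRel G.Adj] :
    spectralRad G = sSup (spectrum ℝ (G.adjMatrix ℝ)) := by
  simp only [spectralRad, ← mem_spectrum_iff_exists_mulVec_eq_smul, Set.ofPred_mem_eq]
  congr!

theorem le_spectralRad [DecidableRel G.Adj] {μ : ℝ} (hμ : μ ∈ spectrum ℝ (G.adjMatrix ℝ)) :
    μ ≤ spectralRad G := by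
  rw [spectralRad_eq_sSup_spectrum]
  exact le_csSup (Matrix.finite_spectrum _).bddAbove hμ

theorem spectralRad_mem_spectrum [DecidableRel G.Adj] [Nonempty V] :
    spectralRad G ∈ spectrum ℝ (G.adjMatrix ℝ) := by
  rw [spectralRad_eq_sSup_spectrum]
  refine Set.Nonempty.csSup_mem ?_ (Matrix.finite_spectrum _)
  exact ⟨_, (G.isHermitian_adjMatrix ℝ).eigenvalues_mem_spectrum_real (Classical.arbitrary V)⟩

theorem spectralRad_mono (h : G ≤ G') : spectralRad G ≤ spectralRad G' := by
  cases isEmpty_or_nonempty V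
  · rw [Subsingleton.elim G G']
  rw [spectralRad_eq_sSup_spectrum (G := G')]
  refine le_sSup_spectrum_of_abs_le (G'.isHermitian_adjMatrix ℝ) (fun u v => ?_)
    spectralRad_mem_spectrum
  have := @h u v
  by_cases huv : G.Adj u v <;> by_cases huv' : G'.Adj u v <;> simp_all

theorem spectralRad_le_maxDegree : spectralRad G ≤ G.maxDegree := by
  rw [spectralRad_eq_sSup_spectrum]
  refine Real.sSup_le (fun μ hμ => ?_) (Nat.cast_nonneg _)
  rw [← Matrix.spectrum_toLin', ← Module.End.hasEigenvalue_iff_mem_spectrum] at hμ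
  obtain ⟨u, hu⟩ := eigenvalue_mem_ball hμ
  have hdeg : ∑ v ∈ univ.erase u, ‖G.adjMatrix ℝ u v‖ = G.degree u := by
    rw [Finset.sum_erase _ (by simp), ← card_neighborFinset_eq_degree, neighborFinset_eq_filter,
      Finset.natCast_card_filter]
    exact Finset.sum_congr rfl fun v _ => by by_cases h : G.Adj u v <;> simp [h]
  rw [hdeg, Metric.mem_closedBall, adjMatrix_apply, if_neg G.irrefl, Real.dist_0_eq_abs] at hu
  exact (le_abs_self μ).trans (hu.trans (Nat.cast_le.2 (G.degree_le_maxDegree u)))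

theorem spectralRad_le_card_of_support_subset {T : Finset V} (hT : G.support ⊆ T) :
    spectralRad G ≤ T.card := by
  refine spectralRad_le_maxDegree.trans (Nat.cast_le.2 ?_)
  refine maxDegree_le_of_forall_degree_le _ _ fun u => Finset.card_le_card fun v hv => ?_
  exact hT ((mem_neighborFinset _ _ _).1 hv).mem_support_right

end SpectralRadius

section Walks

variable {V R : Type*} [Fintype V] [Semiring R] (G : SimpleGraph V)

theorem natCast_walkCount (ℓ : ℕ) (u : V) :
    (walkCount G ℓ u : R) = (G.adjMatrix R ^ ℓ *ᵥ 1) u := by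
  induction ℓ generalizing u with
  | zero => simp [walkCount]
  | succ ℓ ih =>
    rw [walkCount, pow_succ', ← Matrix.mulVec_mulVec, adjMatrix_mulVec_apply,
      neighborFinset_eq_filter, Nat.cast_sum]
    exact Finset.sum_congr rfl fun v _ => ih v

theorem natCast_totalWalks (ℓ : ℕ) :
    (totalWalks G ℓ : R) = 1 ⬝ᵥ G.adjMatrix R ^ ℓ *ᵥ 1 := by
  simp only [totalWalks, Nat.cast_sum, natCast_walkCount, one_dotProduct]

end Walks

section AdjMatrix

variable {V R : Type*} [Semiring R] {G H : SimpleGraph V} {T : Finset V}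

theorem adjMatrix_sup_of_disjoint (h : Disjoint G H) :
    (G ⊔ H).adjMatrix R = G.adjMatrix R + H.adjMatrix R := by
  ext u v
  have := (SimpleGraph.disjoint_left.1 h) u v
  by_cases hG : G.Adj u v <;> by_cases hH : H.Adj u v <;> simp_all

variable [Fintype V]

theorem adjMatrix_mulVec_apply_of_notMem_support {u : V} (hu : u ∉ H.support) (x : V → R) :
    (H.adjMatrix R *ᵥ x) u = 0 := by
  rw [adjMatrix_mulVec_apply]
  refine Finset.sum_eq_zero fun v hv => absurd ?_ hu
  exact ((mem_neighborFinset _ _ _).1 hv).mem_support_left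

theorem adjMatrix_mulVec_congr (hH : H.support ⊆ T) {x y : V → R} (h : ∀ u ∈ T, x u = y u) :
    H.adjMatrix R *ᵥ x = H.adjMatrix R *ᵥ y := by
  ext u
  rw [adjMatrix_mulVec_apply, adjMatrix_mulVec_apply]
  refine Finset.sum_congr rfl fun v hv => h v (hH ?_)
  exact ((mem_neighborFinset _ _ _).1 hv).mem_support_right

end AdjMatrix

section ResolventVec

variable {V K : Type*} [Fintype V] [Field K] {H H₁ H₂ : SimpleGraph V} {T : Finset V} {μ : K}

/-- The vector `(μ - A(H))⁻¹ 1`, whose `u`-th entry is formally `∑ ℓ, w^ℓ_H(u) μ^{-ℓ-1}`; the sum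
of its entries is known as the coronal of `H` at `μ`. It is `0` when `μ` is an eigenvalue of `H`. -/
noncomputable def resolventVec (H : SimpleGraph V) (μ : K) : V → K :=
  resolvent (H.adjMatrix K) μ *ᵥ 1

theorem mul_resolventVec_apply (hμ : μ ∉ spectrum K (H.adjMatrix K)) (u : V) :
    μ * resolventVec H μ u = 1 + (H.adjMatrix K *ᵥ resolventVec H μ) u := by
  have h : (algebraMap K (Matrix V V K) μ - H.adjMatrix K) *ᵥ resolventVec H μ = 1 := by
    rw [resolventVec, Matrix.mulVec_mulVec, resolvent,
      Ring.mul_inverse_cancel _ (spectrum.notMem_iff.1 hμ), Matrix.one_mulVec]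
  rw [Algebra.algebraMap_eq_smul_one, Matrix.sub_mulVec, Matrix.smul_mulVec,
    Matrix.one_mulVec] at h
  exact sub_eq_iff_eq_add.1 (congrFun h u)

theorem resolventVec_apply_of_notMem_support (hμ : μ ∉ spectrum K (H.adjMatrix K)) {u : V}
    (hu : u ∉ H.support) : resolventVec H μ u = μ⁻¹ := by
  refine eq_inv_of_mul_eq_one_right ?_
  rw [mul_resolventVec_apply hμ, adjMatrix_mulVec_apply_of_notMem_support hu, add_zero]

theorem sum_resolventVec_eq_of_totalWalks_eq
    (hw : ∀ i : ℕ, 1 ≤ i → totalWalks H₁ i = totalWalks H₂ i)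
    (hμ₁ : μ ∉ spectrum K (H₁.adjMatrix K)) (hμ₂ : μ ∉ spectrum K (H₂.adjMatrix K)) :
    ∑ u, resolventVec H₁ μ u = ∑ u, resolventVec H₂ μ u := by
  simp only [← one_dotProduct]
  refine dotProduct_resolvent_mulVec_eq (fun i => ?_) hμ₁ hμ₂
  rcases i.eq_zero_or_pos with rfl | hi
  · rw [pow_zero, pow_zero]
  · rw [← natCast_totalWalks, ← natCast_totalWalks, hw i hi]

theorem forall_mem_eq_mul_resolventVec_iff (hH : H.support ⊆ T)
    (hμ : μ ∉ spectrum K (H.adjMatrix K)) {x : V → K} {s : K} :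
    (∀ u ∈ T, x u = s * resolventVec H μ u) ↔
      ∀ u ∈ T, s + (H.adjMatrix K *ᵥ x) u = μ * x u := by
  set b := resolventVec H μ
  constructor
  · intro hx u hu
    rw [adjMatrix_mulVec_congr hH (y := s • b) hx, Matrix.mulVec_smul, Pi.smul_apply, smul_eq_mul,
      hx u hu]
    linear_combination -s * mul_resolventVec_apply hμ u
  · intro hx
    set z : V → K := T.piecewise (x - s • b) 0
    have hz : H.adjMatrix K *ᵥ z = μ • z := by
      ext u
      by_cases hu : u ∈ T
      · rw [adjMatrix_mulVec_congr hH (y := x - s • b) fun v hv => T.piecewise_eq_of_mem _ _ hv]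
        simp only [Matrix.mulVec_sub, Matrix.mulVec_smul, Pi.sub_apply, Pi.smul_apply, smul_eq_mul,
          z, T.piecewise_eq_of_mem _ _ hu]
        linear_combination hx u hu + s * mul_resolventVec_apply hμ u
      · rw [adjMatrix_mulVec_apply_of_notMem_support fun h => hu (hH h), Pi.smul_apply,
          show z u = 0 from T.piecewise_eq_of_notMem _ _ hu, smul_zero]
    have hz0 : z = 0 := by
      by_contra h
      exact hμ (mem_spectrum_iff_exists_mulVec_eq_smul.2 ⟨z, h, hz⟩)
    intro u hu
    have h := congrFun hz0 u
    simp only [z, T.piecewise_eq_of_mem _ _ hu] at h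
    exact sub_eq_zero.1 h

end ResolventVec

section CommonNeighborhood

variable {V R K : Type*} [Semiring R] [Field K] {G H H₁ H₂ : SimpleGraph V} {S T : Finset V} {μ : K}

theorem notMem_of_forall_adj_iff (hG : ∀ u ∈ T, ∀ v, G.Adj u v ↔ v ∈ S) {u : V} (hu : u ∈ S) :
    u ∉ T :=
  fun hT => G.irrefl ((hG u hT u).2 hu)

theorem disjoint_of_support_subset (hG : ∀ u ∈ T, ∀ v, G.Adj u v ↔ v ∈ S) (hH : H.support ⊆ T) :
    Disjoint G H := by
  refine SimpleGraph.disjoint_left.2 fun u v huv huv' => ?_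
  exact notMem_of_forall_adj_iff hG ((hG u (hH huv'.mem_support_left) v).1 huv)
    (hH huv'.mem_support_right)

variable [Fintype V]

theorem adjMatrix_mulVec_apply_of_mem (hG : ∀ u ∈ T, ∀ v, G.Adj u v ↔ v ∈ S) (x : V → R) {u : V}
    (hu : u ∈ T) : (G.adjMatrix R *ᵥ x) u = ∑ v ∈ S, x v := by
  rw [adjMatrix_mulVec_apply]
  congr 1
  ext v
  rw [mem_neighborFinset, hG u hu]

theorem adjMatrix_mulVec_eq_zero_of_sum_eq_zero (hG : ∀ u ∈ T, ∀ v, G.Adj u v ↔ v ∈ S) {d : V → R}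
    (hd : ∀ u ∉ T, d u = 0) (hsum : ∑ u, d u = 0) : G.adjMatrix R *ᵥ d = 0 := by
  ext u
  have hterm : ∀ v, G.adjMatrix R u v * d v = (if u ∈ S then 1 else 0) * d v := by
    intro v
    by_cases hv : v ∈ T
    · simp only [adjMatrix_apply, G.adj_comm u v, hG v hv u]
    · rw [hd v hv, mul_zero, mul_zero]
  simp only [mulVec, dotProduct, hterm, ← Finset.mul_sum, hsum, mul_zero, Pi.zero_apply]

theorem adjMatrix_sup_mulVec_eq_smul_iff (hG : ∀ u ∈ T, ∀ v, G.Adj u v ↔ v ∈ S)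
    (hH : H.support ⊆ T) (hμ : μ ∉ spectrum K (H.adjMatrix K)) {x : V → K} :
    (G ⊔ H).adjMatrix K *ᵥ x = μ • x ↔
      (∀ u ∈ T, x u = (∑ v ∈ S, x v) * resolventVec H μ u) ∧
        ∀ u ∉ T, (G.adjMatrix K *ᵥ x) u = μ * x u := by
  have hon : ∀ u ∈ T, ((G ⊔ H).adjMatrix K *ᵥ x) u = ∑ v ∈ S, x v + (H.adjMatrix K *ᵥ x) u := by
    intro u hu
    rw [adjMatrix_sup_of_disjoint (disjoint_of_support_subset hG hH), Matrix.add_mulVec,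
      Pi.add_apply, adjMatrix_mulVec_apply_of_mem hG x hu]
  have hoff : ∀ u ∉ T, ((G ⊔ H).adjMatrix K *ᵥ x) u = (G.adjMatrix K *ᵥ x) u := by
    intro u hu
    rw [adjMatrix_sup_of_disjoint (disjoint_of_support_subset hG hH), Matrix.add_mulVec,
      Pi.add_apply, adjMatrix_mulVec_apply_of_notMem_support fun h => hu (hH h), add_zero]
  rw [forall_mem_eq_mul_resolventVec_iff hH hμ, funext_iff]
  constructor
  · exact fun h => ⟨fun u hu => (hon u hu).symm.trans (h u),
      fun u hu => (hoff u hu).symm.trans (h u)⟩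
  · rintro ⟨hT, hTc⟩ u
    by_cases hu : u ∈ T
    · exact (hon u hu).trans (hT u hu)
    · exact (hoff u hu).trans (hTc u hu)

theorem mem_spectrum_sup_of_totalWalks_eq (hG : ∀ u ∈ T, ∀ v, G.Adj u v ↔ v ∈ S)
    (hH₁ : H₁.support ⊆ T) (hH₂ : H₂.support ⊆ T)
    (hw : ∀ i : ℕ, 1 ≤ i → totalWalks H₁ i = totalWalks H₂ i)
    (hμ₁ : μ ∉ spectrum K (H₁.adjMatrix K)) (hμ₂ : μ ∉ spectrum K (H₂.adjMatrix K))
    (hμ : μ ∈ spectrum K ((G ⊔ H₁).adjMatrix K)) : μ ∈ spectrum K ((G ⊔ H₂).adjMatrix K) := by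
  obtain ⟨x, hx0, hx⟩ := mem_spectrum_iff_exists_mulVec_eq_smul.1 hμ
  obtain ⟨hxT, hxTc⟩ := (adjMatrix_sup_mulVec_eq_smul_iff hG hH₁ hμ₁).1 hx
  set s := ∑ v ∈ S, x v
  set d : V → K := resolventVec H₂ μ - resolventVec H₁ μ
  have hd : ∀ u ∉ T, d u = 0 := fun u hu => by
    simp only [d, Pi.sub_apply]
    rw [resolventVec_apply_of_notMem_support hμ₁ fun h => hu (hH₁ h),
      resolventVec_apply_of_notMem_support hμ₂ fun h => hu (hH₂ h), sub_self]
  have hGd : G.adjMatrix K *ᵥ d = 0 := by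
    refine adjMatrix_mulVec_eq_zero_of_sum_eq_zero hG hd ?_
    simp only [d, Pi.sub_apply, Finset.sum_sub_distrib,
      sum_resolventVec_eq_of_totalWalks_eq hw hμ₁ hμ₂, sub_self]
  have hy : ∀ u ∉ T, (x + s • d) u = x u := fun u hu => by
    rw [Pi.add_apply, Pi.smul_apply, hd u hu, smul_zero, add_zero]
  have hyS : ∑ v ∈ S, (x + s • d) v = s :=
    Finset.sum_congr rfl fun v hv => hy v (notMem_of_forall_adj_iff hG hv)
  refine mem_spectrum_iff_exists_mulVec_eq_smul.2 ⟨x + s • d, fun h0 => hx0 ?_,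
    (adjMatrix_sup_mulVec_eq_smul_iff hG hH₂ hμ₂).2 ⟨fun u hu => ?_, fun u hu => ?_⟩⟩
  · have hs : s = 0 := by rw [← hyS, h0]; exact Finset.sum_const_zero
    rwa [hs, zero_smul, add_zero] at h0
  · rw [hyS]
    simp only [d, Pi.add_apply, Pi.smul_apply, Pi.sub_apply, smul_eq_mul, hxT u hu]
    ring
  · rw [Matrix.mulVec_add, Matrix.mulVec_smul, hGd, smul_zero, add_zero, hxTc u hu, hy u hu]

theorem spectralRad_sup_le_of_totalWalks_eq (hG : ∀ u ∈ T, ∀ v, G.Adj u v ↔ v ∈ S)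
    (hH₁ : H₁.support ⊆ T) (hH₂ : H₂.support ⊆ T)
    (hρ₁ : spectralRad H₁ < spectralRad G) (hρ₂ : spectralRad H₂ < spectralRad G)
    (hw : ∀ i : ℕ, 1 ≤ i → totalWalks H₁ i = totalWalks H₂ i) :
    spectralRad (G ⊔ H₁) ≤ spectralRad (G ⊔ H₂) := by
  have : Nonempty V := not_isEmpty_iff.1 fun _ =>
    hρ₁.ne (congrArg spectralRad (Subsingleton.elim H₁ G))
  have hρ : spectralRad G ≤ spectralRad (G ⊔ H₁) := spectralRad_mono le_sup_left
  refine le_spectralRad (mem_spectrum_sup_of_totalWalks_eq hG hH₁ hH₂ hw ?_ ?_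
    spectralRad_mem_spectrum)
  · exact fun h => (hρ₁.trans_le hρ).not_ge (le_spectralRad h)
  · exact fun h => (hρ₂.trans_le hρ).not_ge (le_spectralRad h)

end CommonNeighborhood

theorem stmt_0_general {V : Type*} [Fintype V] {G H₁ H₂ : SimpleGraph V} {S T : Finset V}
    (hG : ∀ u ∈ T, ∀ v, G.Adj u v ↔ v ∈ S)
    (hH₁ : H₁.support ⊆ T) (hH₂ : H₂.support ⊆ T)
    (hρ₁ : spectralRad H₁ < spectralRad G) (hρ₂ : spectralRad H₂ < spectralRad G)
    (hw : ∀ i : ℕ, 1 ≤ i → totalWalks H₁ i = totalWalks H₂ i) :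
    spectralRad (G ⊔ H₁) = spectralRad (G ⊔ H₂) :=
  (spectralRad_sup_le_of_totalWalks_eq hG hH₁ hH₂ hρ₁ hρ₂ hw).antisymm
    (spectralRad_sup_le_of_totalWalks_eq hG hH₂ hH₁ hρ₂ hρ₁ fun i hi => (hw i hi).symm)

/-- If `H₁` and `H₂` (graphs on the set `T` of common-neighborhood isolated
vertices of `G - S`) are walk-equivalent, then the graphs obtained from `G` by embedding
their edges have equal spectral radius, provided `ρ(G)` is large enough in terms of `|T|`. -/
theorem stmt_0 (t : ℕ) :
    ∃ R : ℝ, ∀ (V : Type) [Fintype V], ∀ (G H₁ H₂ : SimpleGraph V) (S T : Finset V),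
      G.Connected →
      1 ≤ S.card → S.card < Fintype.card V →
      T.card = t →
      (∀ u ∈ T, u ∉ S) →
      (∀ u ∈ T, ∀ v, v ∉ S → ¬ G.Adj u v) →
      (∀ u ∈ T, ∀ s ∈ S, G.Adj u s) →
      (∀ u v, H₁.Adj u v → u ∈ T ∧ v ∈ T) →
      (∀ u v, H₂.Adj u v → u ∈ T ∧ v ∈ T) →
      spectralRad G > R →
      (∀ i : ℕ, 1 ≤ i → totalWalks H₁ i = totalWalks H₂ i) →
      spectralRad (G ⊔ H₁) = spectralRad (G ⊔ H₂) := by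
  refine ⟨t, fun V _ G H₁ H₂ S T _ _ _ hT _ hTS hST hH₁ hH₂ hρ hw => ?_⟩
  have hG : ∀ u ∈ T, ∀ v, G.Adj u v ↔ v ∈ S := fun u hu v =>
    ⟨fun h => by_contra fun hv => hTS u hu v hv h, hST u hu v⟩
  have hs₁ : H₁.support ⊆ T := fun u ⟨v, h⟩ => (hH₁ u v h).1
  have hs₂ : H₂.support ⊆ T := fun u ⟨v, h⟩ => (hH₂ u v h).1
  exact stmt_0_general hG hs₁ hs₂
    ((spectralRad_le_card_of_support_subset hs₁).trans_lt (hT ▸ hρ))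
    ((spectralRad_le_card_of_support_subset hs₂).trans_lt (hT ▸ hρ)) hw
end

section
/- For an integer $r \ge 2$, let $K_{n_1, n_2, \ldots, n_r}$ be the complete $r$-partite graph of order $n$ with parts $V_1, V_2, \ldots, V_r$, where $n_i = |V_i| \ge 1$ for $1 \le i \le r$ and $\sum_{1 \le i \le r} n_i = n$. For each $1 \le i \le r$, let $H_i$ be a graph with vertex set $V(H_i) \subseteq V_i$ and maximum degree at most $\Delta$. Let $G$ be the graph obtained from $K_{n_1, n_2, \ldots, n_r}$ by adding the edges of $H_i$ inside $V_i$ for all $1 \le i \le r$, and let $\rho = \rho(G)$. If $\rho > \Delta$, then $\sum_{1 \le s \le r} \frac{1}{1 + \frac{n_s}{\rho} + \sum_{i=1}^{\infty} \frac{W^{i}(H_s)}{\rho^{i+1}}} = r - 1$ (in particular, each infinite series converges). -/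
open Finset Matrix SimpleGraph
open scoped Classical

/-!
Let `A` be the adjacency matrix of `H`. For `|μ|` above the maximum degree, `μ - A` is invertible and
`y = (μ - A)⁻¹ 1` is the series of walk counts `∑ w^i(u) / μ^(i+1)`. If `x` is an eigenvector of `G`
with eigenvalue `μ`, total sum `T` and part sums `S_s`, the eigenvalue equation on part `s` reads
`(μ - A) x = T - S_s`, so `x = (T - S_s) y` there. Summing over the part and writing `Y_s` for the sum
of `y` gives `T / (1 + Y_s) = T - S_s`; summing over the `r` parts gives
`T ∑ 1 / (1 + Y_s) = (r - 1) T`, and `T ≠ 0` because otherwise every `S_s`, hence `x`, vanishes.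
-/

section AdjMatrix

variable {V R : Type*} [Fintype V] {H : SimpleGraph V}

lemma adjMatrix_mulVec_eq_sum_adj [NonAssocSemiring R] (x : V → R) (u : V) :
    (H.adjMatrix R *ᵥ x) u = ∑ v with H.Adj u v, x v := by
  rw [adjMatrix_mulVec_apply, neighborFinset_eq_filter]

lemma card_filter_adj_le_maxDegree (u : V) : #{v | H.Adj u v} ≤ H.maxDegree := by
  rw [← neighborFinset_eq_filter, card_neighborFinset_eq_degree]
  exact H.degree_le_maxDegree u

lemma adjMatrix_mulVec_mul_of_forall_adj_eq [CommSemiring R] {c : V → R}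
    (hc : ∀ u v, H.Adj u v → c u = c v) (x : V → R) :
    H.adjMatrix R *ᵥ (c * x) = c * (H.adjMatrix R *ᵥ x) := by
  ext u
  simp only [Pi.mul_apply, adjMatrix_mulVec_eq_sum_adj, mul_sum]
  refine sum_congr rfl fun v hv ↦ ?_
  rw [hc u v (mem_filter.mp hv).2]

lemma norm_adjMatrix_mulVec_le (x : V → ℝ) : ‖H.adjMatrix ℝ *ᵥ x‖ ≤ H.maxDegree * ‖x‖ := by
  refine (pi_norm_le_iff_of_nonneg (by positivity)).mpr fun u ↦ ?_
  rw [adjMatrix_mulVec_eq_sum_adj]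
  calc ‖∑ v with H.Adj u v, x v‖
      ≤ #{v | H.Adj u v} * ‖x‖ := by
        simpa only [sum_const, nsmul_eq_mul] using norm_sum_le_of_le _ fun v _ ↦ norm_le_pi_norm x v
    _ ≤ H.maxDegree * ‖x‖ := by
        gcongr
        exact card_filter_adj_le_maxDegree u

lemma eq_zero_of_adjMatrix_mulVec_eq_smul {μ : ℝ} (hμ : H.maxDegree < |μ|) {x : V → ℝ}
    (hx : H.adjMatrix ℝ *ᵥ x = μ • x) : x = 0 := by
  have hle : |μ| * ‖x‖ ≤ H.maxDegree * ‖x‖ := by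
    simpa only [hx, norm_smul, Real.norm_eq_abs] using norm_adjMatrix_mulVec_le (H := H) x
  by_contra hx0
  exact (mul_lt_mul_of_pos_right hμ (norm_pos_iff.mpr hx0)).not_ge hle

lemma exists_adjMatrix_mulVec_eq_spectralRad_smul [Nonempty V] (G : SimpleGraph V) :
    ∃ x : V → ℝ, x ≠ 0 ∧ G.adjMatrix ℝ *ᵥ x = spectralRad G • x := by
  refine Set.Nonempty.csSup_mem (s := {μ : ℝ | ∃ x : V → ℝ, x ≠ 0 ∧ G.adjMatrix ℝ *ᵥ x = μ • x})
    ?_ ?_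
  · have hA : (G.adjMatrix ℝ).IsHermitian := G.isHermitian_adjMatrix ℝ
    let i : V := Classical.arbitrary V
    refine ⟨hA.eigenvalues i, hA.eigenvectorBasis i, ?_, hA.mulVec_eigenvectorBasis i⟩
    exact (WithLp.ofLp_eq_zero 2).not.mpr (hA.eigenvectorBasis.orthonormal.ne_zero i)
  · refine (Module.End.finite_hasEigenvalue (toLin' (G.adjMatrix ℝ))).subset ?_
    rintro μ ⟨x, hx0, hx⟩
    exact Module.End.hasEigenvalue_of_hasEigenvector
      (Module.End.hasEigenvector_iff.mpr ⟨Module.End.mem_eigenspace_iff.mpr hx, hx0⟩)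

end AdjMatrix

section WalkResolvent

variable {V : Type*} [Fintype V] {H : SimpleGraph V} {μ : ℝ}

lemma natCast_walkCount_succ (i : ℕ) (u : V) :
    (walkCount H (i + 1) u : ℝ) = ∑ v with H.Adj u v, (walkCount H i v : ℝ) := by
  rw [walkCount, Nat.cast_sum]

lemma walkCount_le_maxDegree_pow (i : ℕ) (u : V) : walkCount H i u ≤ H.maxDegree ^ i := by
  induction i generalizing u with
  | zero => rw [walkCount, pow_zero]
  | succ i ih =>
    calc walkCount H (i + 1) u
        ≤ #{v | H.Adj u v} * H.maxDegree ^ i := sum_le_card_nsmul _ _ _ fun v _ ↦ ih v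
      _ ≤ H.maxDegree * H.maxDegree ^ i :=
          Nat.mul_le_mul_right _ (card_filter_adj_le_maxDegree u)
      _ = H.maxDegree ^ (i + 1) := (pow_succ' _ _).symm

lemma summable_walkCount_div_pow (hμ : H.maxDegree < |μ|) (u : V) :
    Summable fun i : ℕ ↦ (walkCount H i u : ℝ) / μ ^ (i + 1) := by
  have hμ0 : 0 < |μ| := (Nat.cast_nonneg _).trans_lt hμ
  have hgeom : Summable fun i : ℕ ↦ ((H.maxDegree : ℝ) / |μ|) ^ i / |μ| :=
    (summable_geometric_of_lt_one (by positivity) ((div_lt_one hμ0).mpr hμ)).div_const _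
  refine hgeom.of_norm_bounded fun i ↦ ?_
  rw [norm_div, norm_pow, Real.norm_natCast, Real.norm_eq_abs, div_pow, div_div, ← pow_succ]
  gcongr
  exact_mod_cast walkCount_le_maxDegree_pow i u

lemma summable_walkCount_succ_div_pow (hμ : H.maxDegree < |μ|) (u : V) :
    Summable fun i : ℕ ↦ (walkCount H (i + 1) u : ℝ) / μ ^ (i + 2) :=
  (summable_nat_add_iff 1).mpr (summable_walkCount_div_pow hμ u)

/-- The generating series `∑ i, w^i(u) / μ^(i+1)` of the walks of `H` starting at `u`. For
`H.maxDegree < |μ|` it converges to the entry at `u` of the resolvent `(μ - A)⁻¹` of the adjacency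
matrix applied to the all-ones vector. -/
noncomputable def walkResolvent (H : SimpleGraph V) (μ : ℝ) (u : V) : ℝ :=
  ∑' i : ℕ, (walkCount H i u : ℝ) / μ ^ (i + 1)

lemma walkResolvent_eq_inv_add_tsum (hμ : H.maxDegree < |μ|) (u : V) :
    walkResolvent H μ u = μ⁻¹ + ∑' i : ℕ, (walkCount H (i + 1) u : ℝ) / μ ^ (i + 2) := by
  rw [walkResolvent, (summable_walkCount_div_pow hμ u).tsum_eq_zero_add]
  simp only [walkCount, Nat.cast_one, zero_add, pow_one, one_div]

lemma adjMatrix_mulVec_walkResolvent (hμ : H.maxDegree < |μ|) :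
    H.adjMatrix ℝ *ᵥ walkResolvent H μ = μ • walkResolvent H μ - 1 := by
  have hμ0 : μ ≠ 0 := abs_pos.mp ((Nat.cast_nonneg _).trans_lt hμ)
  ext u
  calc (H.adjMatrix ℝ *ᵥ walkResolvent H μ) u
      = ∑' i : ℕ, ∑ v with H.Adj u v, (walkCount H i v : ℝ) / μ ^ (i + 1) := by
        rw [adjMatrix_mulVec_eq_sum_adj,
          Summable.tsum_finsetSum fun v _ ↦ summable_walkCount_div_pow hμ v]
        rfl
    _ = ∑' i : ℕ, μ * ((walkCount H (i + 1) u : ℝ) / μ ^ (i + 2)) := by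
        refine tsum_congr fun i ↦ ?_
        rw [← sum_div, ← natCast_walkCount_succ]
        field_simp
        ring
    _ = μ * walkResolvent H μ u - 1 := by
        rw [tsum_mul_left, walkResolvent_eq_inv_add_tsum hμ, mul_add, mul_inv_cancel₀ hμ0,
          add_sub_cancel_left]

lemma summable_sum_walkCount_succ_div_pow (hμ : H.maxDegree < |μ|) (s : Finset V) :
    Summable fun i : ℕ ↦ (∑ u ∈ s, (walkCount H (i + 1) u : ℝ)) / μ ^ (i + 2) := by
  simp only [sum_div]
  exact summable_sum fun u _ ↦ summable_walkCount_succ_div_pow hμ u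

lemma sum_walkResolvent_eq_card_div_add_tsum (hμ : H.maxDegree < |μ|) (s : Finset V) :
    ∑ u ∈ s, walkResolvent H μ u =
      #s / μ + ∑' i : ℕ, (∑ u ∈ s, (walkCount H (i + 1) u : ℝ)) / μ ^ (i + 2) := by
  simp_rw [walkResolvent_eq_inv_add_tsum hμ, sum_add_distrib, sum_const, nsmul_eq_mul, sum_div,
    div_eq_mul_inv (#s : ℝ)]
  rw [Summable.tsum_finsetSum fun u _ ↦ summable_walkCount_succ_div_pow hμ u]

lemma walkResolvent_nonneg (hμ : 0 ≤ μ) (u : V) : 0 ≤ walkResolvent H μ u :=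
  tsum_nonneg fun _ ↦ by positivity

end WalkResolvent

lemma sum_inv_one_add_sum_fiber_eq {V ι K : Type*} [Fintype V] [Fintype ι] [DecidableEq ι]
    [Field K] {p : V → ι} {x y : V → K} (hx0 : x ≠ 0)
    (hxy : ∀ u, x u = (∑ v, x v - ∑ v with p v = p u, x v) * y u)
    (hy : ∀ s, 1 + ∑ v with p v = s, y v ≠ 0) :
    ∑ s, (1 + ∑ v with p v = s, y v)⁻¹ = Fintype.card ι - 1 := by
  set T := ∑ v, x v
  set S : ι → K := fun s ↦ ∑ v with p v = s, x v
  set Y : ι → K := fun s ↦ ∑ v with p v = s, y v with hY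
  have hSY (s : ι) : S s = (T - S s) * Y s := by
    simp only [hY, mul_sum]
    refine sum_congr rfl fun u hu ↦ ?_
    rw [hxy u, (mem_filter.mp hu).2]
  have hTinv (s : ι) : T * (1 + Y s)⁻¹ = T - S s := by
    rw [← div_eq_mul_inv, div_eq_iff (hy s)]
    linear_combination hSY s
  have hT0 : T ≠ 0 := by
    intro hT0
    have hS0 (s : ι) : ∑ v with p v = s, x v = 0 := by simpa [hT0] using hTinv s
    refine hx0 (funext fun u ↦ ?_)
    rw [hxy u, hS0, hT0, sub_zero, zero_mul, Pi.zero_apply]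
  refine mul_left_cancel₀ hT0 ?_
  calc T * ∑ s, (1 + Y s)⁻¹ = ∑ s, (T - S s) := by simp_rw [mul_sum, hTinv]
    _ = Fintype.card ι * T - T := by
        rw [sum_sub_distrib, sum_const, card_univ, nsmul_eq_mul, sum_fiberwise]
    _ = T * (Fintype.card ι - 1) := by ring

section Multipartite

variable {V ι R : Type*} [Fintype V] [DecidableEq ι] {p : V → ι} {H G : SimpleGraph V}

lemma adjMatrix_mulVec_of_adj_iff_ne_or_adj [Ring R] (hH : ∀ u v, H.Adj u v → p u = p v)
    (hG : ∀ u v, G.Adj u v ↔ p u ≠ p v ∨ H.Adj u v) (x : V → R) (u : V) :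
    (G.adjMatrix R *ᵥ x) u =
      ∑ v, x v - ∑ v with p v = p u, x v + (H.adjMatrix R *ᵥ x) u := by
  have hdisj : Disjoint ({v | p v ≠ p u} : Finset V) ({v | H.Adj u v} : Finset V) :=
    disjoint_filter.mpr fun v _ hne hadj ↦ hne (hH u v hadj).symm
  have hunion : ({v | G.Adj u v} : Finset V) =
      ({v | p v ≠ p u} : Finset V) ∪ ({v | H.Adj u v} : Finset V) := by
    rw [← filter_or]
    exact filter_congr fun v _ ↦ by rw [hG, ne_comm]
  rw [adjMatrix_mulVec_eq_sum_adj, adjMatrix_mulVec_eq_sum_adj, hunion, sum_union hdisj,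
    ← sum_filter_add_sum_filter_not univ (fun v ↦ p v = p u) x, add_sub_cancel_left]

lemma eigenvector_eq_mul_walkResolvent {μ : ℝ} (hμ : H.maxDegree < |μ|)
    (hH : ∀ u v, H.Adj u v → p u = p v) (hG : ∀ u v, G.Adj u v ↔ p u ≠ p v ∨ H.Adj u v)
    {x : V → ℝ} (hx : G.adjMatrix ℝ *ᵥ x = μ • x) (u : V) :
    x u = (∑ v, x v - ∑ v with p v = p u, x v) * walkResolvent H μ u := by
  set c : V → ℝ := fun u ↦ ∑ v, x v - ∑ v with p v = p u, x v with hc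
  have hAx : H.adjMatrix ℝ *ᵥ x = μ • x - c := by
    rw [← hx]
    ext w
    rw [Pi.sub_apply, adjMatrix_mulVec_of_adj_iff_ne_or_adj hH hG, add_sub_cancel_left]
  have hcH (v w : V) (hvw : H.Adj v w) : c v = c w := by simp only [hc, hH v w hvw]
  have hdiff : x - c * walkResolvent H μ = 0 := by
    refine eq_zero_of_adjMatrix_mulVec_eq_smul hμ ?_
    rw [mulVec_sub, adjMatrix_mulVec_mul_of_forall_adj_eq hcH, hAx,
      adjMatrix_mulVec_walkResolvent hμ, smul_sub, mul_sub, mul_one, mul_smul_comm,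
      sub_sub_sub_cancel_right]
  exact congrFun (sub_eq_zero.mp hdiff) u

end Multipartite

/-- For `μ < 0` a denominator can vanish (take `μ = -n` and `K_{n,n}`): its inverse is then the
junk value `0` and the identity fails. -/
theorem stmt_2_general {V ι : Type*} [Fintype V] [Fintype ι] [DecidableEq ι] {p : V → ι}
    {H G : SimpleGraph V} (hH : ∀ u v, H.Adj u v → p u = p v)
    (hG : ∀ u v, G.Adj u v ↔ p u ≠ p v ∨ H.Adj u v) {μ : ℝ} (hμ : H.maxDegree < |μ|)
    {x : V → ℝ} (hx0 : x ≠ 0) (hx : G.adjMatrix ℝ *ᵥ x = μ • x)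
    (hden : ∀ s, 1 + ∑ u with p u = s, walkResolvent H μ u ≠ 0) :
    (∀ s, Summable fun i : ℕ ↦
      (∑ u with p u = s, (walkCount H (i + 1) u : ℝ)) / μ ^ (i + 2)) ∧
    ∑ s, (1 + (#{u | p u = s} : ℝ) / μ +
      ∑' i : ℕ, (∑ u with p u = s, (walkCount H (i + 1) u : ℝ)) / μ ^ (i + 2))⁻¹ =
        (Fintype.card ι : ℝ) - 1 := by
  refine ⟨fun s ↦ summable_sum_walkCount_succ_div_pow hμ _, ?_⟩
  simp_rw [add_assoc, ← sum_walkResolvent_eq_card_div_add_tsum hμ]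
  exact sum_inv_one_add_sum_fiber_eq hx0 (eigenvector_eq_mul_walkResolvent hμ hH hG hx) hden

/-- For a graph `G` obtained from a complete `r`-partite graph (parts given
by `p : V → Fin r`, all nonempty) by embedding, inside each part `s`, the edges of a graph
`H_s` (packaged together as `H`, whose edges lie within parts) of maximum degree at most `Δ`:
if `ρ = ρ(G) > Δ` then each series `∑_{i≥1} W^i(H_s)/ρ^{i+1}` converges and
`∑_s 1/(1 + n_s/ρ + ∑_{i≥1} W^i(H_s)/ρ^{i+1}) = r - 1`. -/
theorem stmt_2 {V : Type*} [Fintype V] (r : ℕ) (hr : 2 ≤ r) (p : V → Fin r)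
    (hparts : ∀ i : Fin r, 1 ≤ (Finset.univ.filter (fun v => p v = i)).card)
    (Δ : ℕ) (H : SimpleGraph V)
    (hHin : ∀ u v, H.Adj u v → p u = p v)
    (hΔ : ∀ u, H.degree u ≤ Δ)
    (G : SimpleGraph V)
    (hG : ∀ u v, G.Adj u v ↔ (p u ≠ p v ∨ H.Adj u v))
    (hρ : spectralRad G > Δ) :
    (∀ s : Fin r, Summable (fun i : ℕ =>
      (∑ u ∈ Finset.univ.filter (fun v => p v = s), (walkCount H (i + 1) u : ℝ)) /
        spectralRad G ^ (i + 2))) ∧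
    ∑ s : Fin r,
      (1 + ((Finset.univ.filter (fun v => p v = s)).card : ℝ) / spectralRad G +
        ∑' i : ℕ, (∑ u ∈ Finset.univ.filter (fun v => p v = s), (walkCount H (i + 1) u : ℝ)) /
          spectralRad G ^ (i + 2))⁻¹ = (r : ℝ) - 1 := by
  have hmax : (H.maxDegree : ℝ) < spectralRad G :=
    (Nat.cast_le.mpr (H.maxDegree_le_of_forall_degree_le Δ hΔ)).trans_lt hρ
  have hpos : 0 ≤ spectralRad G := (Nat.cast_nonneg Δ).trans hρ.le
  obtain ⟨v, -⟩ := card_pos.mp (hparts ⟨0, by lia⟩)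
  have : Nonempty V := ⟨v⟩
  obtain ⟨x, hx0, hx⟩ := exists_adjMatrix_mulVec_eq_spectralRad_smul G
  have hden (s : Fin r) : 1 + ∑ u with p u = s, walkResolvent H (spectralRad G) u ≠ 0 :=
    (add_pos_of_pos_of_nonneg one_pos (sum_nonneg fun u _ ↦ walkResolvent_nonneg hpos u)).ne'
  simpa only [Fintype.card_fin] using
    stmt_2_general hHin hG (hmax.trans_le (le_abs_self _)) hx0 hx hden
end

section
/- Let $G$ be a connected graph of order $n$, let $S \subseteq V(G)$ with $1 \le |S| < n$, and let $H$ be a connected component of $G - S$ with maximum degree at most $\Delta$ such that every vertex of $H$ is adjacent in $G$ to every vertex of $S$. Let $\rho = \rho(G)$ and let $\mathbf{x} = (x_v)_{v \in V(G)}$ be the Perron vector of $G$ normalized so that $\sum_{v \in S} x_v = \rho$. If $\rho > \Delta$, then for every vertex $u$ of $H$, $x_u = 1 + \sum_{i=1}^{\infty} \frac{w^{i}_H(u)}{\rho^{i}}$ (in particular, this infinite series converges). -/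
open Finset Matrix SimpleGraph
open scoped Classical

/-!
On `H` the eigenvalue equation of `G` reads `ρ x_u = ρ + ∑_{v ∼ u} x_v`, the sum being over
neighbours in `H`, because the vertices of `S` contribute exactly `∑_{s ∈ S} x_s = ρ`. So `x`
agrees on `H` with a solution of `y = 1 + ρ⁻¹ A y`, where `A` is the adjacency matrix of `H`.
The `ℓ^∞` operator norm of `A` is at most the maximum degree of `H`, hence less than `ρ`, so the
Neumann series gives `y = ∑ ρ⁻ⁱ Aⁱ 1`, and the entries of `Aⁱ 1` count walks.
-/

lemma adjMatrix_pow_mulVec_one_apply {V R : Type*} [Fintype V] [Semiring R] (H : SimpleGraph V)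
    (ℓ : ℕ) (u : V) : (H.adjMatrix R ^ ℓ *ᵥ 1) u = walkCount H ℓ u := by
  induction ℓ generalizing u with
  | zero => simp [walkCount]
  | succ ℓ ih =>
    rw [pow_succ', ← Matrix.mulVec_mulVec, adjMatrix_mulVec_apply, neighborFinset_eq_filter,
      walkCount, Nat.cast_sum]
    exact Finset.sum_congr rfl fun v _ => ih v

section NeumannSeries

open scoped Matrix.Norms.Operator

lemma hasSum_pow_mulVec_of_norm_lt_one {n R : Type*} [Fintype n] [DecidableEq n] [NormedRing R]
    [CompleteSpace R] {M : Matrix n n R} (hM : ‖M‖ < 1) {b y : n → R} (hy : y = b + M *ᵥ y) :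
    HasSum (fun i : ℕ => M ^ i *ᵥ b) y := by
  -- The uniformity of the norm is the entrywise one, but only after unfolding instances.
  have : @CompleteSpace (Matrix n n R) PseudoMetricSpace.toUniformSpace :=
    inferInstanceAs (CompleteSpace (Matrix n n R))
  obtain ⟨N, hN, hN_inv⟩ : ∃ N, HasSum (fun i : ℕ => M ^ i) N ∧ N * (1 - M) = 1 :=
    ⟨_, (summable_geometric_of_norm_lt_one hM).hasSum, geom_series_mul_neg M hM⟩
  have hNb : N *ᵥ b = y := by
    have hb : b = (1 - M) *ᵥ y := by
      rw [Matrix.sub_mulVec, Matrix.one_mulVec, eq_sub_iff_add_eq]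
      exact hy.symm
    rw [hb, Matrix.mulVec_mulVec, hN_inv, Matrix.one_mulVec]
  rw [← hNb]
  exact hN.map (Matrix.mulVec.addMonoidHomLeft b)
    (continuous_id.matrix_mulVec continuous_const)

lemma linfty_opNorm_adjMatrix_le_maxDegree {V R : Type*} [Fintype V] [NormedRing R]
    [NormOneClass R] (H : SimpleGraph V) [DecidableRel H.Adj] :
    ‖H.adjMatrix R‖ ≤ H.maxDegree := by
  have hrow (u : V) : ∑ v, ‖H.adjMatrix R u v‖₊ = H.degree u := by
    simp only [adjMatrix_apply, apply_ite nnnorm, nnnorm_one, nnnorm_zero, Finset.sum_boole,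
      ← card_neighborFinset_eq_degree, neighborFinset_eq_filter]
  have hsup : ‖H.adjMatrix R‖₊ ≤ (H.maxDegree : NNReal) := by
    rw [Matrix.linfty_opNNNorm_def]
    refine Finset.sup_le fun u _ => ?_
    rw [hrow]
    exact_mod_cast H.degree_le_maxDegree u
  exact_mod_cast hsup

lemma hasSum_walkCount_div_pow {V 𝕜 : Type*} [Fintype V] [NormedField 𝕜] [CompleteSpace 𝕜]
    {H : SimpleGraph V} {μ : 𝕜} (hμ : H.maxDegree < ‖μ‖) {y : V → 𝕜}
    (hy : y = 1 + μ⁻¹ • (H.adjMatrix 𝕜 *ᵥ y)) (u : V) :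
    HasSum (fun i : ℕ => (walkCount H i u : 𝕜) / μ ^ i) (y u) := by
  have hμ₀ : 0 < ‖μ‖ := (Nat.cast_nonneg _).trans_lt hμ
  have hnorm : ‖μ⁻¹ • H.adjMatrix 𝕜‖ < 1 := by
    rw [norm_smul, norm_inv, inv_mul_lt_one₀ hμ₀]
    exact (linfty_opNorm_adjMatrix_le_maxDegree H).trans_lt hμ
  rw [← Matrix.smul_mulVec] at hy
  have hterm (i : ℕ) :
      ((μ⁻¹ • H.adjMatrix 𝕜) ^ i *ᵥ 1) u = (walkCount H i u : 𝕜) / μ ^ i := by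
    rw [smul_pow, Matrix.smul_mulVec, Pi.smul_apply, adjMatrix_pow_mulVec_one_apply, inv_pow,
      smul_eq_mul, inv_mul_eq_div]
  simpa only [hterm] using Pi.hasSum.1 (hasSum_pow_mulVec_of_norm_lt_one hnorm hy) u

end NeumannSeries

section CompletelyJoined

variable {V : Type*} [Fintype V] {G H : SimpleGraph V} {S T : Finset V}

lemma sum_neighborFinset_eq_sum_add_sum {M : Type*} [AddCommMonoid M]
    (hH : ∀ u v, H.Adj u v ↔ (u ∈ T ∧ v ∈ T ∧ G.Adj u v))
    (hTS : ∀ u ∈ T, u ∉ S)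
    (hclosed : ∀ u ∈ T, ∀ v, G.Adj u v → v ∈ S ∨ v ∈ T)
    (hfull : ∀ u ∈ T, ∀ s ∈ S, G.Adj u s)
    (f : V → M) {u : V} (hu : u ∈ T) :
    ∑ v ∈ G.neighborFinset u, f v = ∑ v ∈ S, f v + ∑ v ∈ H.neighborFinset u, f v := by
  have hdisj : Disjoint S (H.neighborFinset u) :=
    Finset.disjoint_right.2 fun v hv =>
      hTS v ((hH u v).1 ((H.mem_neighborFinset u v).1 hv)).2.1
  have hunion : G.neighborFinset u = S ∪ H.neighborFinset u := by
    ext v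
    have := hclosed u hu v
    have := hfull u hu v
    simp only [mem_neighborFinset, Finset.mem_union, hH]
    tauto
  rw [hunion, Finset.sum_union hdisj]

-- The value `1` outside `T` is what the recursion forces there, since `H` has no edges off `T`.
lemma piecewise_one_eq_one_add_inv_smul_adjMatrix_mulVec {K : Type*} [Field K]
    (hH : ∀ u v, H.Adj u v ↔ (u ∈ T ∧ v ∈ T ∧ G.Adj u v))
    (hTS : ∀ u ∈ T, u ∉ S)
    (hclosed : ∀ u ∈ T, ∀ v, G.Adj u v → v ∈ S ∨ v ∈ T)
    (hfull : ∀ u ∈ T, ∀ s ∈ S, G.Adj u s)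
    {μ : K} (hμ : μ ≠ 0) {x : V → K} (heig : G.adjMatrix K *ᵥ x = μ • x)
    (hnorm : ∑ v ∈ S, x v = μ) :
    T.piecewise x 1 = 1 + μ⁻¹ • (H.adjMatrix K *ᵥ T.piecewise x 1) := by
  ext u
  rw [Pi.add_apply, Pi.one_apply, Pi.smul_apply, adjMatrix_mulVec_apply, smul_eq_mul]
  by_cases hu : u ∈ T
  · have hsum : ∑ v ∈ H.neighborFinset u, T.piecewise x 1 v = ∑ v ∈ H.neighborFinset u, x v :=
      Finset.sum_congr rfl fun v hv =>
        T.piecewise_eq_of_mem x 1 ((hH u v).1 ((H.mem_neighborFinset u v).1 hv)).2.1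
    have heig_u : μ + ∑ v ∈ H.neighborFinset u, x v = μ * x u := by
      rw [← hnorm, ← sum_neighborFinset_eq_sum_add_sum hH hTS hclosed hfull x hu, hnorm,
        ← adjMatrix_mulVec_apply, heig, Pi.smul_apply, smul_eq_mul]
    rw [hsum, T.piecewise_eq_of_mem x 1 hu, eq_sub_of_add_eq' heig_u]
    field_simp
    ring
  · have hisolated : H.neighborFinset u = ∅ :=
      Finset.eq_empty_of_forall_notMem fun v hv =>
        hu ((hH u v).1 ((H.mem_neighborFinset u v).1 hv)).1
    rw [hisolated, Finset.sum_empty, mul_zero, add_zero, T.piecewise_eq_of_notMem x 1 hu,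
      Pi.one_apply]

theorem stmt_3_general {𝕜 : Type*} [NormedField 𝕜] [CompleteSpace 𝕜]
    (hH : ∀ u v, H.Adj u v ↔ (u ∈ T ∧ v ∈ T ∧ G.Adj u v))
    (hTS : ∀ u ∈ T, u ∉ S)
    (hclosed : ∀ u ∈ T, ∀ v, G.Adj u v → v ∈ S ∨ v ∈ T)
    (hfull : ∀ u ∈ T, ∀ s ∈ S, G.Adj u s)
    {μ : 𝕜} (hμ : H.maxDegree < ‖μ‖) {x : V → 𝕜} (heig : G.adjMatrix 𝕜 *ᵥ x = μ • x)
    (hnorm : ∑ v ∈ S, x v = μ) {u : V} (hu : u ∈ T) :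
    HasSum (fun i : ℕ => (walkCount H (i + 1) u : 𝕜) / μ ^ (i + 1)) (x u - 1) := by
  have hμ₀ : μ ≠ 0 := norm_pos_iff.1 ((Nat.cast_nonneg _).trans_lt hμ)
  have hfix :=
    piecewise_one_eq_one_add_inv_smul_adjMatrix_mulVec hH hTS hclosed hfull hμ₀ heig hnorm
  have hseries := hasSum_walkCount_div_pow hμ hfix u
  rw [T.piecewise_eq_of_mem x 1 hu] at hseries
  simpa [walkCount] using (hasSum_nat_add_iff' 1).2 hseries

end CompletelyJoined

/-- (Lemma on entries of the Perron vector.) If `H` (vertex set `T`) is a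
connected component of `G - S` of maximum degree at most `Δ`, completely joined to `S`, and
the Perron vector `x` of `G` is normalized by `∑_{v ∈ S} x_v = ρ(G)`, then for `ρ(G) > Δ`
every `u ∈ T` satisfies `x_u = 1 + ∑_{i≥1} w^i_H(u)/ρ^i` (a convergent series). -/
theorem stmt_3 {V : Type*} [Fintype V] (G H : SimpleGraph V) (S T : Finset V) (Δ : ℕ)
    (x : V → ℝ)
    (hconn : G.Connected) (hS1 : 1 ≤ S.card) (hS2 : S.card < Fintype.card V)
    (hH : ∀ u v, H.Adj u v ↔ (u ∈ T ∧ v ∈ T ∧ G.Adj u v))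
    (hTS : ∀ u ∈ T, u ∉ S)
    (hclosed : ∀ u ∈ T, ∀ v, G.Adj u v → v ∈ S ∨ v ∈ T)
    (hHconn : (G.induce (T : Set V)).Connected)
    (hΔ : ∀ u, H.degree u ≤ Δ)
    (hfull : ∀ u ∈ T, ∀ s ∈ S, G.Adj u s)
    (hρΔ : spectralRad G > Δ)
    (hx : ∀ v, 0 ≤ x v) (hx0 : x ≠ 0)
    (heig : G.adjMatrix ℝ *ᵥ x = spectralRad G • x)
    (hnorm : ∑ v ∈ S, x v = spectralRad G) :
    ∀ u ∈ T,
      Summable (fun i : ℕ => (walkCount H (i + 1) u : ℝ) / spectralRad G ^ (i + 1)) ∧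
      x u = 1 + ∑' i : ℕ, (walkCount H (i + 1) u : ℝ) / spectralRad G ^ (i + 1) := by
  intro u hu
  have hmax : (H.maxDegree : ℝ) < ‖spectralRad G‖ :=
    (Nat.cast_le.2 (H.maxDegree_le_of_forall_degree_le Δ hΔ)).trans_lt
      (hρΔ.trans_le (Real.le_norm_self _))
  have hseries := stmt_3_general hH hTS hclosed hfull hmax heig hnorm hu
  exact ⟨hseries.summable, by rw [hseries.tsum_eq, add_sub_cancel]⟩
end

section
/- Let $G$ be a connected graph of order $n$, let $S \subseteq V(G)$ with $1 \le |S| < n$, and let $H$ be a connected component of $G - S$ such that every vertex of $H$ is adjacent in $G$ to every vertex of $S$. Let $\rho = \rho(G)$ and let $\mathbf{x} = (x_v)_{v \in V(G)}$ be the Perron vector of $G$ normalized so that $\sum_{v \in S} x_v = \rho$. Then for every vertex $u$ of $H$ and every integer $\ell \ge 1$, $x_u \ge 1 + \sum_{i=1}^{\ell} \frac{w^{i}_H(u)}{\rho^{i}}$. -/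
open Finset Matrix SimpleGraph
open scoped Classical

/-!
At a vertex `u` of `H` the eigenvalue equation reads
`ρ x_u = ∑_{v ∈ S} x_v + ∑_{v ∈ N_H(u)} x_v`, so the normalization gives
`x_u = 1 + ρ⁻¹ ∑_{v ∈ N_H(u)} x_v`. The partial sums of `∑ w^i_H(u) / ρ^i` are the iterates of
this monotone recursion started at `0 ≤ x`, hence stay below its solution `x`.
-/

section WalkCount

variable {V : Type*} [Fintype V]

lemma walkCount_succ (G : SimpleGraph V) (ℓ : ℕ) (u : V) :
    walkCount G (ℓ + 1) u = ∑ v ∈ G.neighborFinset u, walkCount G ℓ v := by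
  rw [neighborFinset_eq_filter, walkCount]

lemma sum_range_walkCount_mul_pow_succ {K : Type*} [Semiring K] (G : SimpleGraph V) (r : K) (m : ℕ)
    (u : V) :
    ∑ i ∈ range (m + 1), (walkCount G i u : K) * r ^ i =
      1 + (∑ v ∈ G.neighborFinset u, ∑ i ∈ range m, (walkCount G i v : K) * r ^ i) * r := by
  rw [sum_range_succ', add_comm, sum_comm, sum_mul]
  congr 1
  · simp [walkCount]
  · simp only [walkCount_succ, Nat.cast_sum, sum_mul, pow_succ, mul_assoc]

lemma sum_range_walkCount_mul_pow_le {K : Type*} [Semiring K] [PartialOrder K] [IsOrderedRing K]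
    {G : SimpleGraph V} {T : Set V} {f : V → K} {r : K} (hr : 0 ≤ r)
    (hT : ∀ u ∈ T, ∀ v, G.Adj u v → v ∈ T) (hf : ∀ u ∈ T, 0 ≤ f u)
    (hrec : ∀ u ∈ T, 1 + (∑ v ∈ G.neighborFinset u, f v) * r ≤ f u) (m : ℕ) :
    ∀ u ∈ T, ∑ i ∈ range m, (walkCount G i u : K) * r ^ i ≤ f u := by
  induction m with
  | zero => simpa using hf
  | succ m ih =>
    intro u hu
    calc ∑ i ∈ range (m + 1), (walkCount G i u : K) * r ^ i
        = 1 + (∑ v ∈ G.neighborFinset u, ∑ i ∈ range m, (walkCount G i v : K) * r ^ i) * r :=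
          sum_range_walkCount_mul_pow_succ G r m u
      _ ≤ 1 + (∑ v ∈ G.neighborFinset u, f v) * r := by
          gcongr with v hv
          exact ih v (hT u hu v ((G.mem_neighborFinset u v).1 hv))
      _ ≤ f u := hrec u hu

end WalkCount

section AdjMatrix

variable {V K : Type*} [Fintype V] {G H : SimpleGraph V} {S : Finset V} {x : V → K} {ρ : K}

lemma sum_neighborFinset_le_of_adjMatrix_mulVec_le [NonAssocSemiring K] [LE K]
    (hρx : G.adjMatrix K *ᵥ x ≤ ρ • x) (u : V) : ∑ v ∈ G.neighborFinset u, x v ≤ ρ * x u := by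
  simpa only [adjMatrix_mulVec_apply, Pi.smul_apply, smul_eq_mul] using hρx u

lemma pos_of_adjMatrix_mulVec_le [Semiring K] [LinearOrder K] [IsOrderedRing K]
    [Nontrivial V] (hG : G.Preconnected) (hx : 0 ≤ x) (hx0 : x ≠ 0)
    (hρx : G.adjMatrix K *ᵥ x ≤ ρ • x) : 0 < ρ := by
  obtain ⟨v, hv⟩ := Function.ne_iff.1 hx0
  obtain ⟨w, hvw⟩ := hG.exists_adj_of_nontrivial v
  have hρw : 0 < ρ * x w :=
    calc 0 < x v := (hx v).lt_of_ne' hv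
      _ ≤ ∑ z ∈ G.neighborFinset w, x z :=
        single_le_sum (fun z _ => hx z) ((G.mem_neighborFinset w v).2 hvw.symm)
      _ ≤ ρ * x w := sum_neighborFinset_le_of_adjMatrix_mulVec_le hρx w
  exact lt_of_not_ge fun hρ => hρw.not_ge (mul_nonpos_of_nonpos_of_nonneg hρ (hx w))

variable [Field K] [LinearOrder K] [IsStrictOrderedRing K]

lemma one_add_sum_neighborFinset_mul_inv_le {u : V} (hρ : 0 < ρ) (hHG : H ≤ G)
    (hSG : S ⊆ G.neighborFinset u) (hSH : Disjoint S (H.neighborFinset u)) (hx : 0 ≤ x)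
    (hρx : G.adjMatrix K *ᵥ x ≤ ρ • x) (hρS : ρ ≤ ∑ v ∈ S, x v) :
    1 + (∑ v ∈ H.neighborFinset u, x v) * ρ⁻¹ ≤ x u := by
  have hsub : S ∪ H.neighborFinset u ⊆ G.neighborFinset u :=
    union_subset hSG fun v hv => by
      simp only [mem_neighborFinset] at hv ⊢
      exact hHG hv
  have hsum : ρ + ∑ v ∈ H.neighborFinset u, x v ≤ ρ * x u :=
    calc ρ + ∑ v ∈ H.neighborFinset u, x v
        ≤ ∑ v ∈ S, x v + ∑ v ∈ H.neighborFinset u, x v := by gcongr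
      _ = ∑ v ∈ S ∪ H.neighborFinset u, x v := (sum_union hSH).symm
      _ ≤ ∑ v ∈ G.neighborFinset u, x v :=
        sum_le_sum_of_subset_of_nonneg hsub fun v _ _ => hx v
      _ ≤ ρ * x u := sum_neighborFinset_le_of_adjMatrix_mulVec_le hρx u
  calc 1 + (∑ v ∈ H.neighborFinset u, x v) * ρ⁻¹
      = (ρ + ∑ v ∈ H.neighborFinset u, x v) / ρ := by field_simp
    _ ≤ x u := (div_le_iff₀' hρ).2 hsum

theorem stmt_4_general {T : Set V} (hρ : 0 < ρ) (hHG : H ≤ G)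
    (hHT : ∀ u ∈ T, ∀ v, H.Adj u v → v ∈ T) (hTS : ∀ u ∈ T, u ∉ S)
    (hfull : ∀ u ∈ T, ∀ s ∈ S, G.Adj u s) (hx : 0 ≤ x)
    (hρx : G.adjMatrix K *ᵥ x ≤ ρ • x) (hρS : ρ ≤ ∑ v ∈ S, x v) {u : V} (hu : u ∈ T) (ℓ : ℕ) :
    1 + ∑ i ∈ range ℓ, (walkCount H (i + 1) u : K) / ρ ^ (i + 1) ≤ x u := by
  have hrec : ∀ v ∈ T, 1 + (∑ w ∈ H.neighborFinset v, x w) * ρ⁻¹ ≤ x v := fun v hv =>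
    one_add_sum_neighborFinset_mul_inv_le hρ hHG
      (fun s hs => (G.mem_neighborFinset v s).2 (hfull v hv s hs))
      (disjoint_right.2 fun w hw => hTS w (hHT v hv w ((H.mem_neighborFinset v w).1 hw)))
      hx hρx hρS
  have hwalks : ∑ i ∈ range (ℓ + 1), (walkCount H i u : K) * ρ⁻¹ ^ i ≤ x u :=
    sum_range_walkCount_mul_pow_le (inv_nonneg.2 hρ.le) hHT (fun v _ => hx v) hrec (ℓ + 1) u hu
  simpa [sum_range_succ', walkCount, add_comm, div_eq_mul_inv] using hwalks

end AdjMatrix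

/-- (Claim 1.) With `H` a connected component of `G - S` completely joined
to `S` and `x` the Perron vector of `G` normalized by `∑_{v ∈ S} x_v = ρ(G)`, every vertex
`u` of `H` satisfies `x_u ≥ 1 + ∑_{i=1}^ℓ w^i_H(u)/ρ^i` for every `ℓ ≥ 1`. -/
theorem stmt_4 {V : Type*} [Fintype V] (G H : SimpleGraph V) (S T : Finset V)
    (x : V → ℝ)
    (hconn : G.Connected) (hS1 : 1 ≤ S.card) (hS2 : S.card < Fintype.card V)
    (hH : ∀ u v, H.Adj u v ↔ (u ∈ T ∧ v ∈ T ∧ G.Adj u v))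
    (hTS : ∀ u ∈ T, u ∉ S)
    (hclosed : ∀ u ∈ T, ∀ v, G.Adj u v → v ∈ S ∨ v ∈ T)
    (hHconn : (G.induce (T : Set V)).Connected)
    (hfull : ∀ u ∈ T, ∀ s ∈ S, G.Adj u s)
    (hx : ∀ v, 0 ≤ x v) (hx0 : x ≠ 0)
    (heig : G.adjMatrix ℝ *ᵥ x = spectralRad G • x)
    (hnorm : ∑ v ∈ S, x v = spectralRad G) :
    ∀ u ∈ T, ∀ ℓ : ℕ, 1 ≤ ℓ →
      1 + ∑ i ∈ Finset.range ℓ, (walkCount H (i + 1) u : ℝ) / spectralRad G ^ (i + 1)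
        ≤ x u := by
  intro u hu ℓ _
  have : Nontrivial V := Fintype.one_lt_card_iff_nontrivial.1 (hS1.trans_lt hS2)
  exact stmt_4_general (T := T) (pos_of_adjMatrix_mulVec_le hconn.preconnected hx hx0 heig.le)
    (fun v w h => ((hH v w).1 h).2.2) (fun v _ w h => ((hH v w).1 h).2.1) hTS hfull hx heig.le
    hnorm.ge hu ℓ
end

section
/- Let $G$ be a connected graph of order $n$, let $S \subseteq V(G)$ with $1 \le |S| < n$, and let $H$ be a connected component of $G - S$ with maximum degree at most $\Delta$ such that every vertex of $H$ is adjacent in $G$ to every vertex of $S$. Let $\rho = \rho(G)$ and let $\mathbf{x} = (x_v)_{v \in V(G)}$ be the Perron vector of $G$ normalized so that $\sum_{v \in S} x_v = \rho$. If $\rho > \Delta$, then for every vertex $u$ of $H$, $x_u \le \frac{\rho}{\rho - \Delta}$. -/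
open Finset Matrix SimpleGraph
open scoped Classical

/-!
Where the eigenvector `x` attains its maximum over `T`, at `w` say, the eigenvalue equation bounds
`ρ * x w` by the sum of `x` over `S` plus at most `Δ` terms, each at most `x w`.
-/

theorem le_div_sub_of_mul_le_add_sum_mul {ι K : Type*} [Field K] [LinearOrder K]
    [IsStrictOrderedRing K] {s : Finset ι} {A : Matrix ι ι K} {x : ι → K}
    {r μ c : K} (hA : ∀ i ∈ s, ∀ j ∈ s, 0 ≤ A i j) (hrow : ∀ i ∈ s, ∑ j ∈ s, A i j ≤ r)
    (hrμ : r < μ) (hx : ∀ i ∈ s, 0 ≤ x i)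
    (hsub : ∀ i ∈ s, μ * x i ≤ c + ∑ j ∈ s, A i j * x j) :
    ∀ i ∈ s, x i ≤ c / (μ - r) := by
  intro i hi
  obtain ⟨w, hw, hmax⟩ := s.exists_max_image x ⟨i, hi⟩
  have hsum : ∑ j ∈ s, A w j * x j ≤ r * x w :=
    calc
      ∑ j ∈ s, A w j * x j ≤ ∑ j ∈ s, A w j * x w :=
        sum_le_sum fun j hj => mul_le_mul_of_nonneg_left (hmax j hj) (hA w hw j hj)
      _ = (∑ j ∈ s, A w j) * x w := (sum_mul s (A w) (x w)).symm
      _ ≤ r * x w := mul_le_mul_of_nonneg_right (hrow w hw) (hx w hw)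
  refine (hmax i hi).trans ?_
  rw [le_div_iff₀ (sub_pos.mpr hrμ)]
  linarith [hsub w hw]

section Graph

variable {V K : Type*}

theorem sum_neighborFinset_eq_of_adjMatrix_mulVec_eq [Fintype V] [NonAssocSemiring K]
    {G : SimpleGraph V} {μ : K} {x : V → K} (heig : G.adjMatrix K *ᵥ x = μ • x) (u : V) :
    ∑ v ∈ G.neighborFinset u, x v = μ * x u := by
  rw [← adjMatrix_mulVec_apply, heig, Pi.smul_apply, smul_eq_mul]

theorem degree_eq_card_filter_adj {G H : SimpleGraph V} {T : Finset V} {u : V}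
    [Fintype (H.neighborSet u)] (hH : ∀ v, H.Adj u v ↔ v ∈ T ∧ G.Adj u v) :
    H.degree u = #{v ∈ T | G.Adj u v} := by
  rw [← card_neighborFinset_eq_degree]
  congr 1
  ext v
  rw [mem_neighborFinset, hH, mem_filter]

variable [Field K] [LinearOrder K] [IsStrictOrderedRing K]

theorem sum_neighborFinset_le_sum_add_sum {G : SimpleGraph V} {u : V}
    [Fintype (G.neighborSet u)] {S T : Finset V} {x : V → K}
    (hadj : ∀ v, G.Adj u v → v ∈ S ∨ v ∈ T) (hx : ∀ v ∈ S ∪ T, 0 ≤ x v) :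
    ∑ v ∈ G.neighborFinset u, x v ≤ ∑ v ∈ S, x v + ∑ v ∈ T, G.adjMatrix K u v * x v := by
  have hsubset : G.neighborFinset u ⊆ S ∪ {v ∈ T | G.Adj u v} := fun v hv =>
    have huv : G.Adj u v := (G.mem_neighborFinset u v).mp hv
    mem_union.mpr <| (hadj v huv).imp_right fun hvT => mem_filter.mpr ⟨hvT, huv⟩
  have hnonneg : ∀ v ∈ S ∪ {v ∈ T | G.Adj u v}, 0 ≤ x v := fun v hv =>
    hx v (union_subset_union_right (filter_subset _ T) hv)
  calc
    ∑ v ∈ G.neighborFinset u, x v ≤ ∑ v ∈ S ∪ {v ∈ T | G.Adj u v}, x v :=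
      sum_le_sum_of_subset_of_nonneg hsubset fun v hv _ => hnonneg v hv
    _ ≤ ∑ v ∈ S, x v + ∑ v ∈ T with G.Adj u v, x v := by
      rw [← sum_union_inter]
      exact le_add_of_nonneg_right <| sum_nonneg fun v hv =>
        hnonneg v (mem_union_left _ (mem_inter.mp hv).1)
    _ = ∑ v ∈ S, x v + ∑ v ∈ T, G.adjMatrix K u v * x v := by
      simp only [adjMatrix_apply, ite_mul, one_mul, zero_mul, sum_filter]

theorem stmt_6_general (G : SimpleGraph V) [G.LocallyFinite] (S T : Finset V) (Δ μ : K)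
    (x : V → K) (hclosed : ∀ u ∈ T, ∀ v, G.Adj u v → v ∈ S ∨ v ∈ T)
    (hΔ : ∀ u ∈ T, (#{v ∈ T | G.Adj u v} : K) ≤ Δ) (hμΔ : Δ < μ)
    (hx : ∀ v ∈ S ∪ T, 0 ≤ x v)
    (hsub : ∀ u ∈ T, μ * x u ≤ ∑ v ∈ G.neighborFinset u, x v) :
    ∀ u ∈ T, x u ≤ (∑ v ∈ S, x v) / (μ - Δ) := by
  refine le_div_sub_of_mul_le_add_sum_mul (A := G.adjMatrix K) ?_ ?_ hμΔ
    (fun u hu => hx u (mem_union_right S hu))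
    fun u hu => (hsub u hu).trans (sum_neighborFinset_le_sum_add_sum (hclosed u hu) hx)
  · intro u _ v _
    rw [adjMatrix_apply]
    split_ifs <;> simp
  · intro u hu
    simpa only [adjMatrix_apply, sum_boole] using hΔ u hu

end Graph

/-- With `H` a connected component of `G - S` of maximum degree at most `Δ`,
completely joined to `S`, and `x` the Perron vector of `G` normalized by
`∑_{v ∈ S} x_v = ρ(G)`: if `ρ(G) > Δ` then `x_u ≤ ρ/(ρ - Δ)` for every vertex `u` of `H`. -/
theorem stmt_6 {V : Type*} [Fintype V] (G H : SimpleGraph V) (S T : Finset V) (Δ : ℕ)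
    (x : V → ℝ)
    (hconn : G.Connected) (hS1 : 1 ≤ S.card) (hS2 : S.card < Fintype.card V)
    (hH : ∀ u v, H.Adj u v ↔ (u ∈ T ∧ v ∈ T ∧ G.Adj u v))
    (hTS : ∀ u ∈ T, u ∉ S)
    (hclosed : ∀ u ∈ T, ∀ v, G.Adj u v → v ∈ S ∨ v ∈ T)
    (hHconn : (G.induce (T : Set V)).Connected)
    (hΔ : ∀ u, H.degree u ≤ Δ)
    (hfull : ∀ u ∈ T, ∀ s ∈ S, G.Adj u s)
    (hρΔ : spectralRad G > Δ)
    (hx : ∀ v, 0 ≤ x v) (hx0 : x ≠ 0)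
    (heig : G.adjMatrix ℝ *ᵥ x = spectralRad G • x)
    (hnorm : ∑ v ∈ S, x v = spectralRad G) :
    ∀ u ∈ T, x u ≤ spectralRad G / (spectralRad G - Δ) := by
  have hdeg : ∀ u ∈ T, (#{v ∈ T | G.Adj u v} : ℝ) ≤ Δ := fun u hu => by
    rw [← degree_eq_card_filter_adj fun v => by rw [hH, and_iff_right hu]]
    exact Nat.cast_le.mpr (hΔ u)
  simpa only [hnorm] using stmt_6_general G S T (Δ : ℝ) (spectralRad G) x hclosed hdeg hρΔ
    (fun v _ => hx v) fun u _ => (sum_neighborFinset_eq_of_adjMatrix_mulVec_eq heig u).ge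
end

section
/- Let $m \ge 1$ be an integer with $m \ne 3$, and let $G$ be a graph with exactly $m$ edges and no isolated vertices. Then $\sum_{v \in V(G)} d_G(v)^2 \le m^2 + m$, with equality if and only if $G$ is isomorphic to the star $K_{1,m}$. (Equivalently, $\mathrm{EX}^2(\mathcal{M}_m) = \{K_{1,m}\}$, where $\mathcal{M}_m$ is the set of graphs with $m$ edges and no isolated vertices.) -/
open Finset Matrix SimpleGraph
open scoped Classical

/-!
Summing `d(u) + d(v)` over the darts `(u, v)` counts every `d(v)²` twice. The edges meeting a given
edge `uv`, itself included, number `d(u) + d(v) - 1 ≤ m`, which gives the bound, and equality means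
that any two edges share an endpoint. If no vertex lies on all edges of such a graph, then an edge
`uv`, an edge avoiding `u` and an edge avoiding `v` form a triangle, and no fourth edge can
meet all three of its sides; so `m = 3`.
-/

section DegreeSum

variable {V : Type*} [Fintype V] (G : SimpleGraph V)

lemma sum_dart_fst {M : Type*} [AddCommMonoid M] (f : V → M) :
    ∑ d : G.Dart, f d.fst = ∑ v, G.degree v • f v := by
  simp_rw [← Finset.sum_fiberwise' univ (fun d : G.Dart ↦ d.fst) f, sum_const,
    G.dart_fst_fiber_card_eq_degree]

lemma sum_dart_snd {M : Type*} [AddCommMonoid M] (f : V → M) :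
    ∑ d : G.Dart, f d.snd = ∑ v, G.degree v • f v := by
  rw [← sum_dart_fst]
  exact Equiv.sum_comp Dart.symm_involutive.toPerm fun d : G.Dart ↦ f d.fst

lemma sum_dart_degree_add_degree :
    ∑ d : G.Dart, (G.degree d.fst + G.degree d.snd) = 2 * ∑ v, G.degree v ^ 2 := by
  simp only [sum_add_distrib, sum_dart_fst G (G.degree ·), sum_dart_snd G (G.degree ·),
    smul_eq_mul, sq, two_mul]

end DegreeSum

section VertexCover

variable {V : Type*} {G : SimpleGraph V} {u v : V}

section Degree

variable [Fintype (G.neighborSet u)] [Fintype (G.neighborSet v)]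

lemma card_incidenceFinset_union_add_one (h : G.Adj u v) :
    #(G.incidenceFinset u ∪ G.incidenceFinset v) + 1 = G.degree u + G.degree v := by
  have h_inter : G.incidenceFinset u ∩ G.incidenceFinset v = {s(u, v)} := by
    rw [← coe_inj]
    simpa using G.incidenceSet_inter_incidenceSet_of_adj h
  rw [← card_singleton s(u, v), ← h_inter, card_union_add_card_inter,
    card_incidenceFinset_eq_degree, card_incidenceFinset_eq_degree]

variable [Fintype G.edgeSet]

variable (G u v) in
lemma incidenceFinset_union_subset :
    G.incidenceFinset u ∪ G.incidenceFinset v ⊆ G.edgeFinset :=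
  union_subset (G.incidenceFinset_subset u) (G.incidenceFinset_subset v)

lemma incidenceFinset_union_eq_edgeFinset_iff :
    G.incidenceFinset u ∪ G.incidenceFinset v = G.edgeFinset ↔ G.IsVertexCover {u, v} := by
  simp only [Finset.ext_iff, Sym2.forall, IsVertexCover, mem_union, mem_incidenceFinset,
    mk'_mem_incidenceSet_iff, mem_edgeFinset, mem_edgeSet, Set.mem_insert_iff,
    Set.mem_singleton_iff]
  grind

lemma degree_add_degree_le (h : G.Adj u v) :
    G.degree u + G.degree v ≤ #G.edgeFinset + 1 := by
  rw [← card_incidenceFinset_union_add_one h]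
  exact Nat.succ_le_succ (card_le_card (incidenceFinset_union_subset G u v))

lemma degree_add_degree_eq_iff_isVertexCover (h : G.Adj u v) :
    G.degree u + G.degree v = #G.edgeFinset + 1 ↔ G.IsVertexCover {u, v} := by
  rw [← card_incidenceFinset_union_add_one h, ← incidenceFinset_union_eq_edgeFinset_iff,
    Nat.add_right_cancel_iff]
  exact ⟨fun h_card ↦ eq_of_subset_of_card_le (incidenceFinset_union_subset G u v) h_card.ge,
    congrArg card⟩

end Degree

/-- A graph is edge-intersecting if any two of its edges share an endpoint, that is, if the two
endpoints of each edge cover all edges. -/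
def IsEdgeIntersecting (G : SimpleGraph V) : Prop :=
  ∀ ⦃u v⦄, G.Adj u v → G.IsVertexCover {u, v}

namespace IsEdgeIntersecting

lemma of_isVertexCover_singleton (h : G.IsVertexCover {u}) : IsEdgeIntersecting G :=
  fun _ _ hab ↦ h.subset <| by grind [IsVertexCover]

lemma edgeSet_eq_of_triangle {w : V} (h : IsEdgeIntersecting G)
    (huv : G.Adj u v) (huw : G.Adj u w) (hvw : G.Adj v w) :
    G.edgeSet = {s(u, v), s(u, w), s(v, w)} := by
  ext ⟨a, b⟩
  simp only [mem_edgeSet, Set.mem_insert_iff, Set.mem_singleton_iff, Sym2.eq_iff]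
  refine ⟨fun hab ↦ ?_, by grind [Adj.symm]⟩
  have h_meets_uv := h huv hab
  have h_meets_uw := h huw hab
  have h_meets_vw := h hvw hab
  grind [hab.ne, huv.ne, huw.ne, hvw.ne]

lemma ncard_edgeSet_eq_three_of_triangle {w : V} (h : IsEdgeIntersecting G)
    (huv : G.Adj u v) (huw : G.Adj u w) (hvw : G.Adj v w) : G.edgeSet.ncard = 3 := by
  rw [h.edgeSet_eq_of_triangle huv huw hvw, Set.ncard_eq_three]
  refine ⟨_, _, _, ?_, ?_, ?_, rfl⟩ <;> grind [Adj.ne]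

theorem exists_isVertexCover_singleton_or_ncard_edgeSet_eq_three [Nonempty V]
    (h : IsEdgeIntersecting G) : (∃ c, G.IsVertexCover {c}) ∨ G.edgeSet.ncard = 3 := by
  by_contra! ⟨h_center, h_card⟩
  have exists_edge_avoiding (c : V) : ∃ a b, G.Adj a b ∧ a ≠ c ∧ b ≠ c := by
    simpa [IsVertexCover, and_assoc] using h_center c
  obtain ⟨u, v, huv, -⟩ := exists_edge_avoiding (Classical.arbitrary V)
  have exists_other_neighbor {u v : V} (huv : G.Adj u v) : ∃ w, G.Adj v w ∧ w ≠ u := by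
    obtain ⟨a, b, hab, hau, hbu⟩ := exists_edge_avoiding u
    have h_meet := h huv hab
    grind [Adj.symm]
  obtain ⟨w, hvw, hwu⟩ := exists_other_neighbor huv
  obtain ⟨w', huw', hw'v⟩ := exists_other_neighbor huv.symm
  obtain rfl : w = w' := by
    have h_meet := h hvw huw'
    grind [huv.ne]
  exact h_card (h.ncard_edgeSet_eq_three_of_triangle huv huw' hvw)

end IsEdgeIntersecting

theorem isEdgeIntersecting_iff_exists_isVertexCover_singleton [Nonempty V]
    (h_card : G.edgeSet.ncard ≠ 3) :
    IsEdgeIntersecting G ↔ ∃ c, G.IsVertexCover {c} :=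
  ⟨fun h ↦ h.exists_isVertexCover_singleton_or_ncard_edgeSet_eq_three.resolve_right h_card,
    fun ⟨_, hc⟩ ↦ .of_isVertexCover_singleton hc⟩

end VertexCover

section SumSqDegree

variable {V : Type*} [Fintype V] (G : SimpleGraph V)

lemma sum_dart_card_edgeFinset_add_one :
    ∑ _d : G.Dart, (#G.edgeFinset + 1) = 2 * (#G.edgeFinset ^ 2 + #G.edgeFinset) := by
  rw [sum_const, card_univ, G.dart_card_eq_twice_card_edges, smul_eq_mul]
  ring

theorem sum_sq_degree_le : ∑ v, G.degree v ^ 2 ≤ #G.edgeFinset ^ 2 + #G.edgeFinset := by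
  refine Nat.le_of_mul_le_mul_left ?_ two_pos
  rw [← sum_dart_degree_add_degree, ← sum_dart_card_edgeFinset_add_one]
  exact sum_le_sum fun d _ ↦ degree_add_degree_le d.adj

theorem sum_sq_degree_eq_iff_isEdgeIntersecting :
    ∑ v, G.degree v ^ 2 = #G.edgeFinset ^ 2 + #G.edgeFinset ↔ IsEdgeIntersecting G := by
  rw [← Nat.mul_right_inj two_ne_zero, ← sum_dart_degree_add_degree,
    ← sum_dart_card_edgeFinset_add_one,
    sum_eq_sum_iff_of_le fun d _ ↦ degree_add_degree_le d.adj]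
  exact ⟨fun h u v huv ↦
      (degree_add_degree_eq_iff_isVertexCover huv).1 (h ⟨(u, v), huv⟩ (mem_univ _)),
    fun h d _ ↦ (degree_add_degree_eq_iff_isVertexCover d.adj).2 (h d.adj)⟩

end SumSqDegree

section Star

variable {V : Type*}

/-- The star on `V` centred at `c` as the complete bipartite graph between its centre and its
leaves. -/
def completeBipartiteGraphIsoStarGraph [DecidableEq V] (c : V) :
    completeBipartiteGraph Unit {v // v ≠ c} ≃g starGraph c where
  toEquiv := (Equiv.sumComm _ _).trans <|
    (Equiv.optionEquivSumPUnit _).symm.trans (Equiv.optionSubtypeNe c)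
  map_rel_iff' {x y} := by
    rcases x with _ | ⟨x, hx⟩ <;> rcases y with _ | ⟨y, hy⟩ <;> simp [*, Ne.symm]

lemma encard_edgeSet_starGraph (c : V) :
    (starGraph c).edgeSet.encard = ENat.card {v // v ≠ c} := by
  rw [← ENat.card_coe_set_eq,
    ← ENat.card_congr (completeBipartiteGraphIsoStarGraph c).mapEdgeSet,
    ENat.card_coe_set_eq, encard_edgeSet_completeBipartiteGraph, ENat.card_eq_coe_fintype_card,
    Fintype.card_unit, Nat.cast_one, one_mul]

lemma nonempty_starGraph_iso_completeBipartiteGraph (c : V) [Fintype (starGraph c).edgeSet] :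
    Nonempty (starGraph c ≃g completeBipartiteGraph Unit (Fin #(starGraph c).edgeFinset)) := by
  have h_leaves : ENat.card {v // v ≠ c} = #(starGraph c).edgeFinset := by
    rw [← encard_edgeSet_starGraph, ← coe_edgeFinset, Set.encard_coe_eq_coe_finsetCard]
  have : Finite {v // v ≠ c} := ENat.card_lt_top.1 (h_leaves ▸ ENat.natCast_lt_top _)
  rw [ENat.card_eq_coe_natCard, Nat.cast_inj] at h_leaves
  exact ⟨(completeBipartiteGraphIsoStarGraph c).symm.trans <|
    completeBipartiteGraphCongr (.refl _) (Finite.equivFinOfCardEq h_leaves)⟩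

variable {G : SimpleGraph V}

lemma eq_starGraph_of_isVertexCover_singleton {c : V} (h_not_isolated : ∀ v, ¬ G.IsIsolated v)
    (hc : G.IsVertexCover {c}) : G = starGraph c := by
  have adj_center {v : V} (hv : v ≠ c) : G.Adj v c := by
    obtain ⟨w, hvw⟩ := exists_adj_iff_not_isIsolated.2 (h_not_isolated v)
    exact (hc hvw).resolve_left hv ▸ hvw
  ext u v
  rw [starGraph_adj]
  grind [IsVertexCover, Adj.ne, Adj.symm]

lemma isVertexCover_singleton_of_iso {W : Type*} (φ : G ≃g completeBipartiteGraph Unit W) :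
    G.IsVertexCover {φ.symm (Sum.inl ())} := by
  rw [← Set.image_singleton, isVertexCover_image_iso]
  simp [IsVertexCover]

theorem nonempty_iso_star_iff_exists_isVertexCover_singleton [Fintype G.edgeSet]
    (h_not_isolated : ∀ v, ¬ G.IsIsolated v) :
    Nonempty (G ≃g completeBipartiteGraph Unit (Fin #G.edgeFinset)) ↔
      ∃ c, G.IsVertexCover {c} := by
  refine ⟨fun ⟨φ⟩ ↦ ⟨_, isVertexCover_singleton_of_iso φ⟩, ?_⟩
  rintro ⟨c, hc⟩
  obtain rfl := eq_starGraph_of_isVertexCover_singleton h_not_isolated hc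
  exact nonempty_starGraph_iso_completeBipartiteGraph c

end Star

/-- For `m ≥ 1`, `m ≠ 3`, any graph `G` with `m` edges and no isolated
vertices satisfies `∑_v d_G(v)² ≤ m² + m`, with equality iff `G ≅ K_{1,m}`. -/
theorem stmt_8 {V : Type*} [Fintype V] (m : ℕ) (hm : 1 ≤ m) (hm3 : m ≠ 3)
    (G : SimpleGraph V)
    (hE : G.edgeFinset.card = m) (hiso : ∀ v, 0 < G.degree v) :
    ∑ v, G.degree v ^ 2 ≤ m ^ 2 + m ∧
      (∑ v, G.degree v ^ 2 = m ^ 2 + m ↔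
        Nonempty (G ≃g completeBipartiteGraph Unit (Fin m))) := by
  subst hE
  obtain ⟨e, -⟩ := card_pos.1 hm
  have : Nonempty V := ⟨e.out.1⟩
  have h_ncard : G.edgeSet.ncard ≠ 3 := by rwa [← coe_edgeFinset, Set.ncard_coe_finset]
  refine ⟨sum_sq_degree_le G, ?_⟩
  rw [sum_sq_degree_eq_iff_isEdgeIntersecting,
    isEdgeIntersecting_iff_exists_isVertexCover_singleton h_ncard,
    nonempty_iso_star_iff_exists_isVertexCover_singleton fun v ↦ (G.degree_pos v).1 (hiso v)]
end

section
/- Let $m \ge 1$ be an integer with $m \ne 3$, and let $G$ be a graph with exactly $m$ edges and no isolated vertices that is not isomorphic to the star $K_{1,m}$. Then $K_{1,m}$ is strictly walk-preferable to $G$; that is, there exists an integer $\ell \ge 1$ with $W^{\ell}(K_{1,m}) > W^{\ell}(G)$ and $W^{i}(K_{1,m}) = W^{i}(G)$ for all $1 \le i \le \ell - 1$. In fact one may take $\ell \le 2$. -/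
open Finset Matrix SimpleGraph
open scoped Classical

/-!
Write `E` for the edge set and `m = #E`. Then `W² = ∑ v, deg(v)²` counts the triples `(e, f, v)`
with `e, f ∈ E` and `v ∈ e ∩ f`. A pair `e = f` contributes `2` and a pair `e ≠ f` contributes `1`
or `0` according to whether `e` and `f` meet, so `W² = m (m + 1) - #{(e, f) | e ∩ f = ∅}`. Hence
`W²` is maximal exactly when any two edges meet, and pairwise meeting edges either share a vertex
(a star) or form a triangle, which has `m = 3`. Since `W¹ = 2 m`, length `1` does not distinguish
graphs with `m` edges.
-/

section PairwiseMeeting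

variable {V : Type*}

theorem exists_forall_mem_or_eq_triangle [Nonempty V] {S : Set (Sym2 V)}
    (hS : ∀ e ∈ S, ∀ f ∈ S, ∃ v ∈ e, v ∈ f) :
    (∃ c, ∀ e ∈ S, c ∈ e) ∨
      ∃ a b c, a ≠ b ∧ a ≠ c ∧ b ≠ c ∧ S = {s(a, b), s(a, c), s(b, c)} := by
  refine or_iff_not_imp_left.2 fun hcenter ↦ ?_
  have exists_avoiding (v : V) : ∃ e ∈ S, v ∉ e := by
    simpa using not_exists.1 hcenter v
  obtain ⟨e, he, -⟩ := exists_avoiding (Classical.arbitrary V)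
  induction e with | _ a b
  obtain ⟨f, hf, haf⟩ := exists_avoiding a
  obtain ⟨g, hg, hbg⟩ := exists_avoiding b
  have hbf : b ∈ f := by grind [hS _ he _ hf]
  have hag : a ∈ g := by grind [hS _ he _ hg]
  obtain ⟨c, hcf, hcg⟩ := hS _ hf _ hg
  have hab : a ≠ b := by grind
  have hac : a ≠ c := by grind
  have hbc : b ≠ c := by grind
  obtain rfl : f = s(b, c) := (Sym2.mem_and_mem_iff hbc).1 ⟨hbf, hcf⟩
  obtain rfl : g = s(a, c) := (Sym2.mem_and_mem_iff hac).1 ⟨hag, hcg⟩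
  refine ⟨a, b, c, hab, hac, hbc, Set.Subset.antisymm (fun k hk ↦ ?_) ?_⟩
  · -- Meeting all three sides of the triangle forces two of its corners into `k`.
    have hkab := hS _ hk _ he
    have hkbc := hS _ hk _ hf
    have hkac := hS _ hk _ hg
    induction k with | _ x y
    grind
  · simp [Set.insert_subset_iff, he, hf, hg]

lemma card_inter_add_ite_disjoint [DecidableEq V] {e f : Sym2 V} (he : ¬ e.IsDiag)
    (hf : ¬ f.IsDiag) :
    #(e.toFinset ∩ f.toFinset) + (if Disjoint e.toFinset f.toFinset then 1 else 0) =
      1 + if e = f then 1 else 0 := by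
  induction e with | _ a b
  induction f with | _ c d
  rw [Sym2.mk_isDiag_iff] at he hf
  simp only [Sym2.toFinset_mk_eq, Finset.disjoint_iff_inter_eq_empty]
  grind

end PairwiseMeeting

section Star

variable {V : Type*}

lemma eq_starGraph_of_forall_mem_edge {G : SimpleGraph V} {c : V} (hG : ∀ v, ∃ w, G.Adj v w)
    (hc : ∀ e ∈ G.edgeSet, c ∈ e) : G = starGraph c := by
  have center_of_adj (a b : V) (hab : G.Adj a b) : a = c ∨ b = c := by
    simpa [eq_comm] using hc s(a, b) hab
  ext a b
  rw [starGraph_adj]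
  refine ⟨fun hab ↦ ⟨hab.ne, center_of_adj a b hab⟩, ?_⟩
  grind [G.adj_comm]

/-- The star with center `c` as a complete bipartite graph: its parts are `{c}`, encoded as `Unit`,
and the set of all other vertices. -/
def starGraphIso [DecidableEq V] (c : V) :
    starGraph c ≃g completeBipartiteGraph Unit {v // v ≠ c} where
  toEquiv := (Equiv.sumCompl (· = c)).symm.trans (Equiv.sumCongr (Equiv.ofUnique _ _) (.refl _))
  map_rel_iff' {a b} := by
    by_cases ha : a = c <;> by_cases hb : b = c <;> simp [ha, hb, Ne.symm]

lemma card_edgeFinset_completeBipartiteGraph (α β : Type*) [Fintype α] [Fintype β] :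
    #(completeBipartiteGraph α β).edgeFinset = Fintype.card α * Fintype.card β := by
  have hencard := encard_edgeSet_completeBipartiteGraph (W₁ := α) (W₂ := β)
  rw [← coe_edgeFinset, Set.encard_coe_eq_coe_finsetCard] at hencard
  simp only [ENat.card_eq_coe_fintype_card] at hencard
  exact_mod_cast hencard

lemma nonempty_iso_star_of_forall_mem_edge [Fintype V] {G : SimpleGraph V} {c : V}
    (hG : ∀ v, ∃ w, G.Adj v w) (hc : ∀ e ∈ G.edgeSet, c ∈ e) :
    Nonempty (G ≃g completeBipartiteGraph Unit (Fin #G.edgeFinset)) := by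
  obtain ⟨φ⟩ : Nonempty (G ≃g completeBipartiteGraph Unit {v // v ≠ c}) := by
    rw [eq_starGraph_of_forall_mem_edge hG hc]
    exact ⟨starGraphIso c⟩
  have hcard : Fintype.card {v // v ≠ c} = #G.edgeFinset := by
    rw [φ.card_edgeFinset_eq, card_edgeFinset_completeBipartiteGraph, Fintype.card_unit, one_mul]
  exact ⟨φ.trans (completeBipartiteGraphCongr (.refl _) (Fintype.equivFinOfCardEq hcard))⟩

end Star

section Walks

variable {V : Type*} [Fintype V] (G : SimpleGraph V)

lemma walkCount_one (v : V) : walkCount G 1 v = G.degree v := by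
  simp [walkCount, ← card_neighborFinset_eq_degree, neighborFinset_eq_filter]

lemma totalWalks_one : totalWalks G 1 = 2 * #G.edgeFinset := by
  simp only [totalWalks, walkCount_one, sum_degrees_eq_twice_card_edges]

lemma totalWalks_two : totalWalks G 2 = ∑ v, G.degree v ^ 2 := calc
  totalWalks G 2 = ∑ u, ∑ v ∈ G.neighborFinset u, G.degree v := by
    simp only [neighborFinset_eq_filter, ← walkCount_one]
    rfl
  _ = ∑ v, ∑ _u ∈ G.neighborFinset v, G.degree v :=
    Finset.sum_comm' (by simp [G.adj_comm])
  _ = ∑ v, G.degree v ^ 2 := by simp [sq]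

lemma sum_card_inter_edges :
    ∑ p ∈ G.edgeFinset ×ˢ G.edgeFinset, #(p.1.toFinset ∩ p.2.toFinset) =
      ∑ v, G.degree v ^ 2 := calc
  _ = ∑ p ∈ G.edgeFinset ×ˢ G.edgeFinset, #{v | v ∈ p.1 ∧ v ∈ p.2} := by
    congr! 2
    ext
    simp
  _ = ∑ v, #{p ∈ G.edgeFinset ×ˢ G.edgeFinset | v ∈ p.1 ∧ v ∈ p.2} :=
    Finset.sum_card_bipartiteAbove_eq_sum_card_bipartiteBelow _
  _ = ∑ v, G.degree v ^ 2 := by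
    refine Finset.sum_congr rfl fun v _ ↦ ?_
    rw [Finset.filter_product (v ∈ ·) (v ∈ ·), ← incidenceFinset_eq_filter, Finset.card_product,
      card_incidenceFinset_eq_degree, sq]

theorem totalWalks_two_add_card_disjoint_edges :
    totalWalks G 2 +
        #{p ∈ G.edgeFinset ×ˢ G.edgeFinset | Disjoint p.1.toFinset p.2.toFinset} =
      #G.edgeFinset * (#G.edgeFinset + 1) := calc
  _ = ∑ p ∈ G.edgeFinset ×ˢ G.edgeFinset, (#(p.1.toFinset ∩ p.2.toFinset) +
        if Disjoint p.1.toFinset p.2.toFinset then 1 else 0) := by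
    rw [totalWalks_two, ← sum_card_inter_edges, Finset.card_filter, Finset.sum_add_distrib]
  _ = ∑ p ∈ G.edgeFinset ×ˢ G.edgeFinset, (1 + if p.1 = p.2 then 1 else 0) :=
    Finset.sum_congr rfl fun p hp ↦
      have ⟨h₁, h₂⟩ := Finset.mem_product.1 hp
      card_inter_add_ite_disjoint (G.not_isDiag_of_mem_edgeFinset h₁)
        (G.not_isDiag_of_mem_edgeFinset h₂)
  _ = #G.edgeFinset * (#G.edgeFinset + 1) := by
    simp [Finset.sum_add_distrib, Finset.sum_product, mul_add, -Finset.sum_boole, -mem_edgeFinset]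

theorem totalWalks_two_le : totalWalks G 2 ≤ #G.edgeFinset * (#G.edgeFinset + 1) :=
  Nat.le.intro (totalWalks_two_add_card_disjoint_edges G)

variable {G}

theorem totalWalks_two_eq_iff :
    totalWalks G 2 = #G.edgeFinset * (#G.edgeFinset + 1) ↔
      ∀ e ∈ G.edgeSet, ∀ f ∈ G.edgeSet, ∃ v ∈ e, v ∈ f := by
  rw [← totalWalks_two_add_card_disjoint_edges, Nat.left_eq_add, Finset.card_eq_zero,
    Finset.filter_eq_empty_iff]
  simp only [Finset.mem_product, mem_edgeFinset, Finset.not_disjoint_iff, Sym2.mem_toFinset,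
    Prod.forall, and_imp]
  grind

theorem totalWalks_two_lt_of_no_center [Nonempty V] (hcenter : ¬ ∃ c, ∀ e ∈ G.edgeSet, c ∈ e)
    (hthree : #G.edgeFinset ≠ 3) :
    totalWalks G 2 < #G.edgeFinset * (#G.edgeFinset + 1) := by
  refine (totalWalks_two_le G).lt_of_ne fun heq ↦ hthree ?_
  obtain hc | ⟨a, b, c, hab, hac, hbc, htriangle⟩ :=
    exists_forall_mem_or_eq_triangle (totalWalks_two_eq_iff.1 heq)
  · exact absurd hc hcenter
  · rw [← Set.ncard_coe_finset, coe_edgeFinset]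
    exact Set.ncard_eq_three.2 ⟨_, _, _, by grind, by grind, by grind, htriangle⟩

theorem totalWalks_two_star (m : ℕ) :
    totalWalks (completeBipartiteGraph Unit (Fin m)) 2 = m * (m + 1) := by
  have center_mem : ∀ e ∈ (completeBipartiteGraph Unit (Fin m)).edgeSet, .inl () ∈ e := by
    rw [edgeSet_completeBipartiteGraph]
    rintro _ ⟨_, rfl⟩
    exact Sym2.mem_mk_left _ _
  simpa [card_edgeFinset_completeBipartiteGraph] using
    totalWalks_two_eq_iff.2 fun e he f hf ↦ ⟨_, center_mem e he, center_mem f hf⟩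

end Walks

/-- For `m ≥ 1`, `m ≠ 3`: if `G` has exactly `m` edges, no isolated
vertices, and is not isomorphic to the star `K_{1,m}`, then `K_{1,m}` is strictly
walk-preferable to `G`, witnessed by some `ℓ ≤ 2`. -/
theorem stmt_11 {V : Type*} [Fintype V] (m : ℕ) (hm : 1 ≤ m) (hm3 : m ≠ 3)
    (G : SimpleGraph V)
    (hE : G.edgeFinset.card = m) (hiso : ∀ v, 0 < G.degree v)
    (hnot : ¬ Nonempty (G ≃g completeBipartiteGraph Unit (Fin m))) :
    ∃ ℓ : ℕ, 1 ≤ ℓ ∧ ℓ ≤ 2 ∧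
      totalWalks G ℓ < totalWalks (completeBipartiteGraph Unit (Fin m)) ℓ ∧
      ∀ i : ℕ, 1 ≤ i → i ≤ ℓ - 1 →
        totalWalks (completeBipartiteGraph Unit (Fin m)) i = totalWalks G i := by
  have : Nonempty V := by
    obtain ⟨e, -⟩ := Finset.card_pos.1 (hm.trans_eq hE.symm)
    exact ⟨e.out.1⟩
  have hcenter : ¬ ∃ c, ∀ e ∈ G.edgeSet, c ∈ e := by
    rintro ⟨c, hc⟩
    have adj_exists (v : V) : ∃ w, G.Adj v w := (G.degree_pos_iff_exists_adj v).1 (hiso v)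
    exact hnot (hE ▸ nonempty_iso_star_of_forall_mem_edge adj_exists hc)
  refine ⟨2, one_le_two, le_rfl, ?_, fun i hi hi' ↦ ?_⟩
  · rw [totalWalks_two_star, ← hE]
    exact totalWalks_two_lt_of_no_center hcenter (hE.trans_ne hm3)
  · obtain rfl : i = 1 := le_antisymm hi' hi
    simp [totalWalks_one, card_edgeFinset_completeBipartiteGraph, hE]
end
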